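/- arXiv:1706.06928 — 4 statements merged into one kernel-verified Lean document; each statement's English description precedes it below -/
import Mathlib

section
/- For every N ≥ 1 and every m ≥ 1 there exists a positive real constant ℓ^m_N > 0 such that for all x ∈ ℝ^N∖{0}, |∇^m log|x|| = √(ℓ^m_N) / |x|^m, where log|x| denotes the function x ↦ log of the Euclidean norm of x. -/
open MeasureTheory Metric Filter Matrix

noncomputable section

/-- The mixed partial derivative `∂^m u / ∂x_{i 0} ⋯ ∂x_{i (m-1)} (x)`, realized as the
iterated Fréchet derivative applied to the corresponding standard basis vectors. -/
def mixedPartial (N m : ℕ) (u : EuclideanSpace ℝ (Fin N) → ℝ)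
    (i : Fin m → Fin N) (x : EuclideanSpace ℝ (Fin N)) : ℝ :=
  iteratedFDeriv ℝ m u x fun k => EuclideanSpace.single (i k) 1

/-- The Frobenius norm `|∇^m u (x)|` of the tensor of `m`-th order partial derivatives. -/
def gradNorm (N m : ℕ) (u : EuclideanSpace ℝ (Fin N) → ℝ)
    (x : EuclideanSpace ℝ (Fin N)) : ℝ :=
  Real.sqrt (∑ i : Fin m → Fin N, mixedPartial N m u i x ^ 2)

/-- The function `x ↦ log |x|`. -/
def logNorm (N : ℕ) (x : EuclideanSpace ℝ (Fin N)) : ℝ := Real.log ‖x‖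

/-- The constant `ℓ_N = ∑ (∂^N log|x|/∂x_{i_1}⋯∂x_{i_N} (e_1))²`. -/
def ell (N : ℕ) (hN : 0 < N) : ℝ :=
  ∑ i : Fin N → Fin N,
    mixedPartial N N (logNorm N) i (EuclideanSpace.single (⟨0, hN⟩ : Fin N) 1) ^ 2

/-- `ω_{N-1}`, the surface measure of the unit sphere `𝕊^{N-1} ⊂ ℝ^N`,
expressed as `N` times the volume of the unit ball. -/
def omegaSphere (N : ℕ) : ℝ :=
  N * (volume (ball (0 : EuclideanSpace ℝ (Fin N)) 1)).toReal

/-- The sum of squares of a multilinear form over an orthonormal basis is basis independent. -/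
lemma sum_sq_basis_indep {N : ℕ} (b c : OrthonormalBasis (Fin N) ℝ (EuclideanSpace ℝ (Fin N)))
    (m : ℕ) (T : MultilinearMap ℝ (fun _ : Fin m => EuclideanSpace ℝ (Fin N)) ℝ) :
    ∑ i : Fin m → Fin N, T (fun k => b (i k)) ^ 2
      = ∑ i : Fin m → Fin N, T (fun k => c (i k)) ^ 2 := by
  induction m with
  | zero =>
    refine Finset.sum_congr rfl fun i _ => ?_
    congr 2
    exact Subsingleton.elim _ _
  | succ m ih =>
    have key : ∀ d : OrthonormalBasis (Fin N) ℝ (EuclideanSpace ℝ (Fin N)),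
        ∑ i : Fin (m + 1) → Fin N, T (fun k => d (i k)) ^ 2
          = ∑ j : Fin N, ∑ i : Fin m → Fin N, (T.curryLeft (d j)) (fun k => d (i k)) ^ 2 := by
      intro d
      rw [← (Fin.consEquiv (fun _ => Fin N)).sum_comp, Fintype.sum_prod_type]
      refine Finset.sum_congr rfl fun j _ => Finset.sum_congr rfl fun i _ => ?_
      rw [MultilinearMap.curryLeft_apply]
      congr 2
      funext k
      refine Fin.cases ?_ (fun k => ?_) k <;> simp [Fin.consEquiv]
    rw [key, key]
    simp_rw [ih (T.curryLeft (b _))]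
    rw [Finset.sum_comm, Finset.sum_comm (s := Finset.univ (α := Fin N))]
    refine Finset.sum_congr rfl fun i _ => ?_
    let φ : EuclideanSpace ℝ (Fin N) →ₗ[ℝ] ℝ :=
      { toFun := fun v => T.curryLeft v (fun k => c (i k))
        map_add' := by intro v w; simp only [map_add, MultilinearMap.add_apply]
        map_smul' := by intro r v; simp only [map_smul, MultilinearMap.smul_apply, RingHom.id_apply] }
    obtain ⟨y, hy⟩ := (InnerProductSpace.toDual ℝ _).surjective (LinearMap.toContinuousLinearMap φ)
    have hφ : ∀ v, T.curryLeft v (fun k => c (i k)) = inner ℝ y v := by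
      intro v
      have := congrArg (fun L => L v) hy
      simpa [φ] using this.symm
    simp_rw [hφ]
    have h1 := b.sum_sq_norm_inner_left y
    have h2 := c.sum_sq_norm_inner_left y
    simp only [Real.norm_eq_abs, sq_abs] at h1 h2
    rw [h1, h2]

lemma logNorm_contDiffAt (N : ℕ) (n : WithTop ℕ∞) {x : EuclideanSpace ℝ (Fin N)} (hx : x ≠ 0) :
    ContDiffAt ℝ n (logNorm N) x :=
  (contDiffAt_norm ℝ hx).log (norm_ne_zero_iff.2 hx)

/-- Covariance of the derivatives of `log|x|` under similarities. -/
lemma logNorm_similarity (N m : ℕ) (hm : 1 ≤ m)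
    (g : EuclideanSpace ℝ (Fin N) ≃L[ℝ] EuclideanSpace ℝ (Fin N)) (r : ℝ) (hr : 0 < r)
    (hg : ∀ v, ‖g v‖ = r * ‖v‖) (e : EuclideanSpace ℝ (Fin N)) (he : e ≠ 0)
    (v : Fin m → EuclideanSpace ℝ (Fin N)) :
    iteratedFDeriv ℝ m (logNorm N) (g e) (fun k => g (v k))
      = iteratedFDeriv ℝ m (logNorm N) e v := by
  have h1 : iteratedFDeriv ℝ m (logNorm N ∘ g) e =
      (iteratedFDeriv ℝ m (logNorm N) (g e)).compContinuousLinearMap fun _ => g := by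
    simpa [iteratedFDerivWithin_univ] using
      g.iteratedFDerivWithin_comp_right (logNorm N) uniqueDiffOn_univ (Set.mem_univ (g e)) m
  have h2 : (logNorm N ∘ g) =ᶠ[nhds e] ((fun _ => Real.log r) + logNorm N) := by
    filter_upwards [isOpen_ne.mem_nhds he] with y hy
    simp only [logNorm, Function.comp, Pi.add_apply, hg]
    exact Real.log_mul hr.ne' (norm_ne_zero_iff.2 hy)
  have h3 : iteratedFDeriv ℝ m (logNorm N ∘ g) e = iteratedFDeriv ℝ m (logNorm N) e := by
    rw [(h2.iteratedFDeriv ℝ m).eq_of_nhds,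
      iteratedFDeriv_add_apply contDiffAt_const (logNorm_contDiffAt N m he),
      iteratedFDeriv_const_of_ne (by omega)]
    simp
  rw [← h3, h1]
  rfl

lemma logNorm_radial (N m : ℕ) (hm : 1 ≤ m) (e : EuclideanSpace ℝ (Fin N)) (he : ‖e‖ = 1) :
    iteratedFDeriv ℝ m (logNorm N) e (fun _ => e) ≠ 0 := by
  have he0 : e ≠ 0 := norm_ne_zero_iff.1 (by rw [he]; exact one_ne_zero)
  let L : ℝ →L[ℝ] EuclideanSpace ℝ (Fin N) := ContinuousLinearMap.toSpanSingleton ℝ e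
  have hL : ∀ t, L t = t • e := fun t => by simp [L]
  let s : Set (EuclideanSpace ℝ (Fin N)) := {0}ᶜ
  have hs : IsOpen s := isOpen_compl_singleton
  have hs' : IsOpen (L ⁻¹' s) := hs.preimage L.continuous
  have h1s : L 1 ∈ s := by simpa [s, hL] using he0
  have h := L.iteratedFDerivWithin_comp_right (f := logNorm N) (s := s) (n := m)
    (fun x hx => (logNorm_contDiffAt N m hx).contDiffWithinAt) hs.uniqueDiffOn hs'.uniqueDiffOn
    h1s le_rfl
  rw [iteratedFDerivWithin_of_isOpen m hs h1s,
    iteratedFDerivWithin_of_isOpen m hs' (show (1:ℝ) ∈ L ⁻¹' s from h1s)] at h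
  have hc : logNorm N ∘ L = Real.log := by
    funext t
    simp [logNorm, hL, norm_smul, he]
  have h' := congrArg (fun M => M (fun _ => (1:ℝ))) h
  simp only [hc, ContinuousMultilinearMap.compContinuousLinearMap_apply, hL, one_smul] at h'
  rw [← h', ← iteratedDeriv_eq_iteratedFDeriv]
  obtain ⟨k, rfl⟩ : ∃ k, m = k + 1 := ⟨m - 1, by omega⟩
  rw [iteratedDeriv_succ', Real.deriv_log', iteratedDeriv_eq_iterate]
  have := iter_deriv_inv (𝕜 := ℝ) k 1
  have h4 : deriv^[k] (Inv.inv : ℝ → ℝ) 1 = (-1) ^ k * k.factorial := by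
    simpa using this
  rw [h4]
  positivity

/-- there is a positive constant `ℓ^m_N` with
`|∇^m log|x|| = √(ℓ^m_N)/|x|^m` for all `x ≠ 0`. -/
theorem statement3 (N m : ℕ) (hN : 1 ≤ N) (hm : 1 ≤ m) :
    ∃ ℓ : ℝ, 0 < ℓ ∧ ∀ x : EuclideanSpace ℝ (Fin N), x ≠ 0 →
      gradNorm N m (logNorm N) x = Real.sqrt ℓ / ‖x‖ ^ m := by
  let i0 : Fin N := ⟨0, hN⟩
  let e : EuclideanSpace ℝ (Fin N) := EuclideanSpace.single i0 1
  have hen : ‖e‖ = 1 := by simp [e]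
  have he0 : e ≠ 0 := norm_ne_zero_iff.1 (by rw [hen]; exact one_ne_zero)
  refine ⟨∑ i : Fin m → Fin N, mixedPartial N m (logNorm N) i e ^ 2, ?_, ?_⟩
  · refine Finset.sum_pos' (fun i _ => sq_nonneg _) ⟨fun _ => i0, Finset.mem_univ _, ?_⟩
    have := logNorm_radial N m hm e hen
    exact lt_of_le_of_ne (sq_nonneg _) (pow_ne_zero 2 this).symm
  · intro x hx
    have hr : 0 < ‖x‖ := norm_pos_iff.2 hx
    set r := ‖x‖ with hrdef
    obtain ⟨b, hb⟩ := Orthonormal.exists_orthonormalBasis_extension_of_card_eq (𝕜 := ℝ)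
      (E := EuclideanSpace ℝ (Fin N)) (ι := Fin N) (by simp)
      (v := fun _ => r⁻¹ • x) (s := {i0}) (by
        refine ⟨fun i => ?_, fun i j hij => ?_⟩
        · simp [norm_smul, ← hrdef, abs_of_pos hr, hr.ne']
        · exact absurd (Subsingleton.elim i j) hij)
    have hb0 : b i0 = r⁻¹ • x := hb i0 rfl
    let c := EuclideanSpace.basisFun (Fin N) ℝ
    let R : EuclideanSpace ℝ (Fin N) ≃ₗᵢ[ℝ] EuclideanSpace ℝ (Fin N) := c.equiv b (Equiv.refl _)
    have hR : ∀ i, R (EuclideanSpace.single i 1) = b i := by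
      intro i
      have : R (c i) = b i := by simp [R]
      simpa [c] using this
    let g := R.toContinuousLinearEquiv.trans
      (ContinuousLinearEquiv.smulLeft (Units.mk0 r hr.ne'))
    have hgv : ∀ v, g v = r • R v := fun v => rfl
    have hge : g e = x := by
      rw [hgv, hR, hb0, smul_smul, mul_inv_cancel₀ hr.ne', one_smul]
    have hsim := logNorm_similarity N m hm g r hr
      (fun v => by rw [hgv, norm_smul, R.norm_map, Real.norm_eq_abs, abs_of_pos hr]) e he0
    have hpt : ∀ i : Fin m → Fin N, mixedPartial N m (logNorm N) i e
        = r ^ m * iteratedFDeriv ℝ m (logNorm N) x (fun k => b (i k)) := by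
      intro i
      rw [mixedPartial, ← hsim, hge]
      simp_rw [hgv, hR]
      rw [ContinuousMultilinearMap.map_smul_univ (iteratedFDeriv ℝ m (logNorm N) x) (fun _ => r)]
      simp
    have hinv := sum_sq_basis_indep b c m (iteratedFDeriv ℝ m (logNorm N) x).toMultilinearMap
    have hinv' : ∑ i : Fin m → Fin N, iteratedFDeriv ℝ m (logNorm N) x (fun k => b (i k)) ^ 2
        = ∑ i : Fin m → Fin N, mixedPartial N m (logNorm N) i x ^ 2 := by
      simpa [c, mixedPartial] using hinv
    simp_rw [hpt, mul_pow]
    rw [← Finset.mul_sum, hinv', Real.sqrt_mul (by positivity), Real.sqrt_sq (by positivity),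
      gradNorm]
    field_simp
end
end

section
/- Let N ≥ 1, let u be a real-valued function of class C^{2N} on ℝ^N∖{0}, and let A be an orthogonal N×N matrix; set u_A(x) = u(Ax). Then for every x ∈ ℝ^N∖{0}, ∑_{(i_1,…,i_N)∈{1,…,N}^N} ∂^N/∂x_{i_1}⋯∂x_{i_N} ( |x|^N ∂^N u_A/∂x_{i_1}⋯∂x_{i_N} )(x) = [ ∑_{(i_1,…,i_N)∈{1,…,N}^N} ∂^N/∂y_{i_1}⋯∂y_{i_N} ( |y|^N ∂^N u/∂y_{i_1}⋯∂y_{i_N} ) ](Ax); i.e. the 2N-th order operator u ↦ ∑_{i_1,…,i_N} ∂^N(|x|^N ∂^N u) commutes with the action of O(N). -/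
open MeasureTheory Metric Filter Matrix

noncomputable section

/-- The differential operator `u ↦ ∑_{i_1,…,i_N} ∂^N(|x|^N ∂^N u/∂x_{i_1}⋯∂x_{i_N})/∂x_{i_1}⋯∂x_{i_N}`
(without the sign `(-1)^N`). -/
def Lop (N : ℕ) (u : EuclideanSpace ℝ (Fin N) → ℝ) (x : EuclideanSpace ℝ (Fin N)) : ℝ :=
  ∑ i : Fin N → Fin N,
    mixedPartial N N (fun y => ‖y‖ ^ N * mixedPartial N N u i y) i x

/-- The continuous linear equivalence of an orthogonal matrix. -/
def orthoEquiv {N : ℕ} (A : Matrix (Fin N) (Fin N) ℝ) (hA : Aᵀ * A = 1) :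
    EuclideanSpace ℝ (Fin N) ≃L[ℝ] EuclideanSpace ℝ (Fin N) :=
  LinearEquiv.toContinuousLinearEquiv
    (LinearEquiv.ofLinearMap (Matrix.toEuclideanLin A) (Matrix.toEuclideanLin Aᵀ)
      (by
        ext1 v
        ext k
        simp [Matrix.toLpLin_apply, Matrix.mulVec_mulVec, mul_eq_one_comm.mp hA])
      (by
        ext1 v
        ext k
        simp [Matrix.toLpLin_apply, Matrix.mulVec_mulVec, hA]))

lemma orthoEquiv_apply {N : ℕ} (A : Matrix (Fin N) (Fin N) ℝ) (hA : Aᵀ * A = 1)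
    (y : EuclideanSpace ℝ (Fin N)) : orthoEquiv A hA y = Matrix.toEuclideanLin A y := rfl

lemma norm_orthoEquiv {N : ℕ} (A : Matrix (Fin N) (Fin N) ℝ) (hA : Aᵀ * A = 1)
    (y : EuclideanSpace ℝ (Fin N)) : ‖orthoEquiv A hA y‖ = ‖y‖ := by
  have h : ∀ v : EuclideanSpace ℝ (Fin N), ‖v‖ ^ 2 = v.ofLp ⬝ᵥ v.ofLp := by
    intro v
    rw [EuclideanSpace.norm_sq_eq]
    simp [dotProduct, ← sq]
  have h2 : ‖orthoEquiv A hA y‖ ^ 2 = ‖y‖ ^ 2 := by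
    rw [h, h, orthoEquiv_apply, Matrix.toLpLin_apply]
    simp only [Matrix.dotProduct_mulVec, Matrix.vecMul_mulVec]
    simp [hA]
  exact (sq_eq_sq₀ (norm_nonneg _) (norm_nonneg _)).mp h2

lemma orthoEquiv_single {N : ℕ} (A : Matrix (Fin N) (Fin N) ℝ) (hA : Aᵀ * A = 1)
    (k : Fin N) : orthoEquiv A hA (EuclideanSpace.single k 1) =
      ∑ j, A j k • (EuclideanSpace.single j 1 : EuclideanSpace ℝ (Fin N)) := by
  ext l
  simp [orthoEquiv_apply, Matrix.toLpLin_apply, Pi.single_apply]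

lemma mixedPartial_comp {N : ℕ} (m : ℕ) (A : Matrix (Fin N) (Fin N) ℝ) (hA : Aᵀ * A = 1)
    (f : EuclideanSpace ℝ (Fin N) → ℝ) (i : Fin m → Fin N) (y : EuclideanSpace ℝ (Fin N)) :
    mixedPartial N m (fun z => f (orthoEquiv A hA z)) i y =
      ∑ j : Fin m → Fin N, (∏ k, A (j k) (i k)) * mixedPartial N m f j (orthoEquiv A hA y) := by
  have h := (orthoEquiv A hA).iteratedFDerivWithin_comp_right f uniqueDiffOn_univ
    (Set.mem_univ (orthoEquiv A hA y)) m
  rw [Set.preimage_univ, iteratedFDerivWithin_univ, iteratedFDerivWithin_univ] at h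
  unfold mixedPartial
  change iteratedFDeriv ℝ m (f ∘ orthoEquiv A hA) y _ = _
  rw [h, ContinuousMultilinearMap.compContinuousLinearMap_apply]
  simp only [ContinuousLinearEquiv.coe_coe, orthoEquiv_single]
  rw [ContinuousMultilinearMap.map_sum]
  refine Finset.sum_congr rfl fun j _ => ?_
  rw [ContinuousMultilinearMap.map_smul_univ, smul_eq_mul]

lemma mixedPartial_sum {N m : ℕ} {ι : Type*} [Fintype ι] (c : ι → ℝ)
    (G : ι → EuclideanSpace ℝ (Fin N) → ℝ) (i : Fin m → Fin N) (x : EuclideanSpace ℝ (Fin N))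
    (hG : ∀ j, ContDiffAt ℝ m (G j) x) :
    mixedPartial N m (fun y => ∑ j, c j * G j y) i x = ∑ j, c j * mixedPartial N m (G j) i x := by
  unfold mixedPartial
  rw [iteratedFDeriv_fun_sum_apply (fun j _ => contDiffAt_const.mul (hG j)),
    _root_.sum_apply]
  refine Finset.sum_congr rfl fun j _ => ?_
  have := iteratedFDeriv_const_smul_apply' (a := c j) (hG j)
  simp only [smul_eq_mul] at this
  rw [this]
  rfl

lemma sum_prod_ortho {N m : ℕ} (A : Matrix (Fin N) (Fin N) ℝ) (hA : Aᵀ * A = 1)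
    (j l : Fin m → Fin N) :
    ∑ i : Fin m → Fin N, (∏ k, A (j k) (i k)) * (∏ k, A (l k) (i k)) =
      if j = l then 1 else 0 := by
  have hA' : A * Aᵀ = 1 := mul_eq_one_comm.mp hA
  have h : ∀ a b, ∑ t, A a t * A b t = if a = b then (1 : ℝ) else 0 := by
    intro a b
    rw [← Matrix.one_apply, ← hA']
    simp [Matrix.mul_apply]
  simp_rw [← Finset.prod_mul_distrib]
  rw [← Fintype.prod_sum (fun k t => A (j k) t * A (l k) t)]
  simp_rw [h]
  split_ifs with hjl
  · simp [hjl]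
  · obtain ⟨k, hk⟩ := Function.ne_iff.mp hjl
    exact Finset.prod_eq_zero (Finset.mem_univ k) (by simp [hk])

/-- the operator `u ↦ ∑ ∂^N(|x|^N ∂^N u)` commutes with the action of `O(N)`. -/
theorem statement4 (N : ℕ) (hN : 1 ≤ N)
    (u : EuclideanSpace ℝ (Fin N) → ℝ)
    (hu : ContDiffOn ℝ ((2 * N : ℕ) : ℕ∞) u {(0 : EuclideanSpace ℝ (Fin N))}ᶜ)
    (A : Matrix (Fin N) (Fin N) ℝ) (hA : Aᵀ * A = 1)
    (x : EuclideanSpace ℝ (Fin N)) (hx : x ≠ 0) :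
    Lop N (fun y => u (Matrix.toEuclideanLin A y)) x = Lop N u (Matrix.toEuclideanLin A x) := by
  have hAx : orthoEquiv A hA x ≠ 0 := by simpa using hx
  have hG : ∀ j : Fin N → Fin N, ContDiffAt ℝ N
      (fun z => ‖z‖ ^ N * mixedPartial N N u j z) (orthoEquiv A hA x) := by
    intro j
    have hu' : ContDiffAt ℝ ((2 * N : ℕ) : ℕ∞) u (orthoEquiv A hA x) :=
      hu.contDiffAt (isOpen_compl_singleton.mem_nhds hAx)
    have h1 : ContDiffAt ℝ N (iteratedFDeriv ℝ N u) (orthoEquiv A hA x) :=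
      hu'.iteratedFDeriv_right (by
        have : N + N ≤ 2 * N := by omega
        exact_mod_cast this)
    refine ((contDiffAt_norm ℝ hAx).pow N).mul ?_
    exact ((ContinuousMultilinearMap.apply ℝ (fun _ : Fin N => EuclideanSpace ℝ (Fin N)) ℝ
      (fun k => EuclideanSpace.single (j k) 1)).contDiff.contDiffAt).comp _ h1
  have hG' : ∀ j : Fin N → Fin N, ContDiffAt ℝ N
      (fun y => (fun z => ‖z‖ ^ N * mixedPartial N N u j z) (orthoEquiv A hA y)) x := fun j =>
    (hG j).comp x (orthoEquiv A hA).contDiff.contDiffAt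
  have hF : ∀ i : Fin N → Fin N,
      (fun y => ‖y‖ ^ N * mixedPartial N N (fun z => u (orthoEquiv A hA z)) i y) =
      fun y => ∑ j : Fin N → Fin N, (∏ k, A (j k) (i k)) *
        (fun z => ‖z‖ ^ N * mixedPartial N N u j z) (orthoEquiv A hA y) := by
    intro i
    funext y
    rw [mixedPartial_comp, Finset.mul_sum]
    refine Finset.sum_congr rfl fun j _ => ?_
    simp only [norm_orthoEquiv]
    ring
  change Lop N (fun y => u (orthoEquiv A hA y)) x = Lop N u (orthoEquiv A hA x)
  unfold Lop
  calc _ = ∑ i : Fin N → Fin N, ∑ j : Fin N → Fin N, ∑ l : Fin N → Fin N,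
        ((∏ k, A (j k) (i k)) * (∏ k, A (l k) (i k))) *
          mixedPartial N N (fun z => ‖z‖ ^ N * mixedPartial N N u j z) l (orthoEquiv A hA x) := by
        refine Finset.sum_congr rfl fun i _ => ?_
        rw [hF i, mixedPartial_sum _ _ _ _ hG']
        refine Finset.sum_congr rfl fun j _ => ?_
        rw [mixedPartial_comp N A hA (fun z => ‖z‖ ^ N * mixedPartial N N u j z),
          Finset.mul_sum]
        simp only [mul_assoc]
    _ = ∑ j : Fin N → Fin N, ∑ l : Fin N → Fin N, (if j = l then 1 else 0) *
          mixedPartial N N (fun z => ‖z‖ ^ N * mixedPartial N N u j z) l (orthoEquiv A hA x) := by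
        rw [Finset.sum_comm]
        refine Finset.sum_congr rfl fun j _ => ?_
        rw [Finset.sum_comm]
        refine Finset.sum_congr rfl fun l _ => ?_
        rw [← Finset.sum_mul, sum_prod_ortho A hA]
    _ = _ := by simp
end
end

section
/- Let N ≥ 1. Then for every x ∈ ℝ^N∖{0}, ∑_{(i_1,…,i_N)∈{1,…,N}^N} ∂^N/∂x_{i_1}⋯∂x_{i_N} ( |x|^N · ∂^N log|x| / ∂x_{i_1}⋯∂x_{i_N} )(x) = 0; i.e. away from the origin, log|x| is a pointwise solution of the 2N-th order equation ∑_{i_1,…,i_N} ∂^N(|x|^N ∂^N u) = 0. -/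
open MeasureTheory Metric Filter Matrix

noncomputable section

open scoped ContDiff

/-- Functions smooth away from the origin, normalised to vanish at the origin. -/
def SmF (N : ℕ) : Submodule ℝ (EuclideanSpace ℝ (Fin N) → ℝ) where
  carrier := {f | f 0 = 0 ∧ ∀ x, x ≠ 0 → ContDiffAt ℝ ∞ f x}
  add_mem' := by
    rintro f g ⟨hf, hf'⟩ ⟨hg, hg'⟩
    exact ⟨by simp [hf, hg], fun x hx => (hf' x hx).add (hg' x hx)⟩
  zero_mem' := ⟨rfl, fun x _ => contDiffAt_const⟩
  smul_mem' := by
    rintro c f ⟨hf, hf'⟩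
    exact ⟨by simp [hf], fun x hx => contDiffAt_const.smul (hf' x hx)⟩

namespace SmF
variable {N : ℕ}

lemma ext' {f g : SmF N} (h : ∀ x, x ≠ 0 → f.1 x = g.1 x) : f = g := by
  apply Subtype.ext
  funext x
  by_cases hx : x = 0
  · rw [hx, f.2.1, g.2.1]
  · exact h x hx

lemma diff (f : SmF N) {x : EuclideanSpace ℝ (Fin N)} (hx : x ≠ 0) :
    DifferentiableAt ℝ f.1 x := (f.2.2 x hx).differentiableAt (by simp)

/-- Turn a function smooth off the origin into an element of `SmF`. -/
def mk (f : EuclideanSpace ℝ (Fin N) → ℝ) (h : ∀ x, x ≠ 0 → ContDiffAt ℝ ∞ f x) : SmF N :=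
  ⟨fun x => if x = 0 then 0 else f x, by simp, fun x hx => by
    refine (h x hx).congr_of_eventuallyEq ?_
    filter_upwards [isOpen_ne.mem_nhds hx] with y hy
    have : y ≠ 0 := hy
    simp [this]⟩

lemma mk_apply (f : EuclideanSpace ℝ (Fin N) → ℝ) (h) {x} (hx : x ≠ 0) :
    (mk f h).1 x = f x := by simp [mk, hx]

lemma mk_ev (f : EuclideanSpace ℝ (Fin N) → ℝ) (h) {x} (hx : x ≠ 0) :
    (mk f h).1 =ᶠ[nhds x] f := by
  filter_upwards [isOpen_ne.mem_nhds hx] with y hy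
  exact mk_apply f h hy

lemma contDiffAt_D (f : SmF N) (v : EuclideanSpace ℝ (Fin N)) :
    ∀ x, x ≠ 0 → ContDiffAt ℝ ∞ (fun x => fderiv ℝ f.1 x v) x := fun x hx =>
  ((f.2.2 x hx).fderiv_right (m := ∞) (by simp)).clm_apply contDiffAt_const

/-- Partial derivative. -/
def D (j : Fin N) : Module.End ℝ (SmF N) where
  toFun f := mk (fun x => fderiv ℝ f.1 x (EuclideanSpace.single j 1)) (contDiffAt_D f _)
  map_add' f g := ext' fun x hx => by
    simp only [Submodule.coe_add, Pi.add_apply, mk_apply _ _ hx]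
    rw [fderiv_add (diff f hx) (diff g hx)]; rfl
  map_smul' c f := ext' fun x hx => by
    simp only [Submodule.coe_smul, Pi.smul_apply, mk_apply _ _ hx, RingHom.id_apply]
    rw [fderiv_const_smul (diff f hx)]; rfl

lemma D_apply (j : Fin N) (f : SmF N) {x} (hx : x ≠ 0) :
    (D j f).1 x = fderiv ℝ f.1 x (EuclideanSpace.single j 1) :=
  mk_apply _ (contDiffAt_D f _) hx

lemma DD_apply (i j : Fin N) (f : SmF N) {x} (hx : x ≠ 0) :
    (D i (D j f)).1 x =
      fderiv ℝ (fderiv ℝ f.1) x (EuclideanSpace.single i 1) (EuclideanSpace.single j 1) := by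
  rw [D_apply _ _ hx]
  have : (D j f).1 =ᶠ[nhds x] fun x => fderiv ℝ f.1 x (EuclideanSpace.single j 1) :=
    mk_ev _ (contDiffAt_D f _) hx
  rw [this.fderiv_eq, fderiv_clm_apply]
  · simp
  · exact ((f.2.2 x hx).fderiv_right (m := ∞) (by simp)).differentiableAt (by simp)
  · simp

lemma D_comm (i j : Fin N) : D i * D j = D j * D i := by
  ext1 f
  refine ext' fun x hx => ?_
  simp only [Module.End.mul_apply, DD_apply _ _ _ hx]
  exact ((f.2.2 x hx).isSymmSndFDerivAt (by simp only [minSmoothness_of_isRCLikeNormedField]; exact WithTop.coe_le_coe.2 le_top)).eq _ _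

/-- Multiplication operator. -/
def M : SmF N →ₗ[ℝ] Module.End ℝ (SmF N) where
  toFun g :=
    { toFun := fun f => ⟨fun x => g.1 x * f.1 x, by simp [g.2.1], fun x hx =>
        (g.2.2 x hx).mul (f.2.2 x hx)⟩
      map_add' := fun f f' => by ext x; simp [mul_add]
      map_smul' := fun c f => by ext x; simp; ring }
  map_add' g g' := by ext f x; simp [add_mul]
  map_smul' c g := by ext f x; simp; ring

lemma M_apply (g f : SmF N) (x) : (M g f).1 x = g.1 x * f.1 x := rfl

lemma D_M (j : Fin N) (g : SmF N) : D j * M g = M (D j g) + M g * D j := by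
  ext1 f
  refine ext' fun x hx => ?_
  simp only [Module.End.mul_apply, LinearMap.add_apply, Submodule.coe_add, Pi.add_apply, M_apply,
    D_apply _ _ hx]
  have : (M g f).1 = fun x => g.1 x * f.1 x := rfl
  rw [this, fderiv_fun_mul (diff g hx) (diff f hx)]
  simp; ring

lemma D_M_apply (j : Fin N) (g f : SmF N) : D j (M g f) = M (D j g) f + M g (D j f) :=
  congrArg (fun T => T f) (D_M j g)

/-- Laplacian. -/
def Lap (N : ℕ) : Module.End ℝ (SmF N) := ∑ j, D j * D j

lemma Lap_apply (f : SmF N) : Lap N f = ∑ j, D j (D j f) := by simp [Lap]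

lemma D_Lap (i : Fin N) : D i * Lap N = Lap N * D i := by
  simp only [Lap, Finset.mul_sum, Finset.sum_mul]
  refine Finset.sum_congr rfl fun j _ => ?_
  rw [← mul_assoc, D_comm i j, mul_assoc, D_comm i j, mul_assoc]

/-- The operator `∑ ∂^k (g ∂^k ·)`. -/
def Pop : ℕ → SmF N → Module.End ℝ (SmF N)
  | 0, g => M g
  | k+1, g => ∑ j, D j * Pop k g * D j

lemma Pop_rec (k : ℕ) : ∀ g : SmF N, (2:ℝ) • Pop (k+1) g + Pop k (Lap N g) =
    Lap N * Pop k g + Pop k g * Lap N := by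
  induction k with
  | zero =>
    intro g
    simp only [Pop, Lap_apply, map_sum]
    simp only [Lap, Finset.mul_sum, Finset.sum_mul, Finset.smul_sum]
    rw [← Finset.sum_add_distrib, ← Finset.sum_add_distrib]
    refine Finset.sum_congr rfl fun j _ => ?_
    rw [mul_assoc (D j) (D j) (M g), D_M, mul_add, ← mul_assoc (D j) (M g), D_M, D_M, two_smul]
    simp only [mul_add, add_mul, mul_assoc]
    abel
  | succ k ih =>
    intro g
    have e : ∀ j : Fin N, (2:ℝ) • (D j * Pop (k+1) g * D j) + D j * Pop k (Lap N g) * D j =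
        Lap N * (D j * Pop k g * D j) + (D j * Pop k g * D j) * Lap N := by
      intro j
      rw [← smul_mul_assoc, ← mul_smul_comm, ← add_mul, ← mul_add, ih g]
      have h1 : D j * (Lap N * Pop k g) * D j = Lap N * (D j * Pop k g * D j) := by
        rw [← mul_assoc, D_Lap]; simp only [mul_assoc]
      have h2 : D j * (Pop k g * Lap N) * D j = (D j * Pop k g * D j) * Lap N := by
        simp only [mul_assoc]; rw [D_Lap]
      rw [← h1, ← h2, mul_add, add_mul]
    rw [show Pop (k+2) g = ∑ j, D j * Pop (k+1) g * D j from rfl, Finset.smul_sum,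
      show Pop (k+1) (Lap N g) = ∑ j, D j * Pop k (Lap N g) * D j from rfl,
      ← Finset.sum_add_distrib]
    simp only [e]
    rw [Finset.sum_add_distrib, ← Finset.mul_sum, ← Finset.sum_mul]
    rfl

lemma Pop_smul (k : ℕ) (c : ℝ) (g : SmF N) : Pop k (c • g) = c • Pop k g := by
  induction k with
  | zero => simp [Pop]
  | succ k ih => simp [Pop, ih, Finset.smul_sum]

/-- Powers of the norm. -/
def rho (N : ℕ) (s : ℝ) : SmF N := mk (fun x => ‖x‖ ^ s) fun x hx =>
  (contDiffAt_norm ℝ hx).rpow_const_of_ne (by simpa using hx)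

/-- Logarithm of the norm. -/
def lg (N : ℕ) : SmF N := mk (fun x => Real.log ‖x‖) fun x hx =>
  (contDiffAt_norm ℝ hx).log (by simpa using hx)

/-- Coordinates. -/
def X (j : Fin N) : SmF N := mk (fun x => x j) fun x _ =>
  (EuclideanSpace.proj (𝕜 := ℝ) j : EuclideanSpace ℝ (Fin N) →L[ℝ] ℝ).contDiff.contDiffAt

lemma rho_apply (s : ℝ) {x : EuclideanSpace ℝ (Fin N)} (hx : x ≠ 0) :
    (rho N s).1 x = ‖x‖ ^ s := mk_apply _ _ hx

lemma lg_apply {x : EuclideanSpace ℝ (Fin N)} (hx : x ≠ 0) :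
    (lg N).1 x = Real.log ‖x‖ := mk_apply _ _ hx

lemma X_apply (j : Fin N) {x : EuclideanSpace ℝ (Fin N)} (hx : x ≠ 0) :
    (X j).1 x = x j := mk_apply _ _ hx

lemma hasDeriv_norm {x : EuclideanSpace ℝ (Fin N)} (hx : x ≠ 0) :
    HasFDerivAt (fun y : EuclideanSpace ℝ (Fin N) => ‖y‖) (‖x‖⁻¹ • innerSL ℝ x) x := by
  have h := (hasStrictFDerivAt_norm_sq x).hasFDerivAt.sqrt (by simpa using hx)
  have e : (fun y : EuclideanSpace ℝ (Fin N) => √(‖y‖ ^ 2)) = fun y => ‖y‖ := by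
    funext y; exact Real.sqrt_sq (norm_nonneg y)
  rw [e] at h
  refine h.congr_fderiv ?_
  rw [Real.sqrt_sq (norm_nonneg x)]
  ext v
  simp
  have : ‖x‖ ≠ 0 := by simpa using hx
  field_simp

lemma D_rho (j : Fin N) (s : ℝ) : D j (rho N s) = s • M (X j) (rho N (s-2)) := by
  refine ext' fun x hx => ?_
  have hr : 0 < ‖x‖ := by simpa using hx
  have h : HasFDerivAt (fun y : EuclideanSpace ℝ (Fin N) => ‖y‖ ^ s) _ x :=
    (hasDeriv_norm hx).rpow_const (p := s) (Or.inl hr.ne')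
  rw [D_apply _ _ hx, (show (rho N s).1 =ᶠ[nhds x] _ from mk_ev _ _ hx).fderiv_eq, h.fderiv]
  simp only [Submodule.coe_smul, Pi.smul_apply, M_apply, X_apply _ hx, rho_apply _ hx]
  have e : ‖x‖ ^ (s-1) = ‖x‖ ^ (s-2) * ‖x‖ := by
    rw [← Real.rpow_add_one hr.ne']; congr 1; ring
  simp [EuclideanSpace.inner_single_right, e]
  field_simp

lemma D_lg (j : Fin N) : D j (lg N) = M (X j) (rho N (-2)) := by
  refine ext' fun x hx => ?_
  have hr : 0 < ‖x‖ := by simpa using hx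
  have h : HasFDerivAt (fun y : EuclideanSpace ℝ (Fin N) => Real.log ‖y‖) _ x :=
    (hasDeriv_norm hx).log hr.ne'
  rw [D_apply _ _ hx, (show (lg N).1 =ᶠ[nhds x] _ from mk_ev _ _ hx).fderiv_eq, h.fderiv]
  simp only [M_apply, X_apply _ hx, rho_apply _ hx]
  have e : ‖x‖ ^ (-2:ℝ) = ‖x‖⁻¹ * ‖x‖⁻¹ := by
    rw [Real.rpow_neg hr.le]; norm_num; ring
  simp [EuclideanSpace.inner_single_right, e]
  ring

lemma D_X (j : Fin N) : D j (X j) = rho N 0 := by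
  refine ext' fun x hx => ?_
  rw [D_apply _ _ hx, (show (X j).1 =ᶠ[nhds x] _ from mk_ev _ _ hx).fderiv_eq,
    rho_apply _ hx]
  have := (EuclideanSpace.proj (𝕜 := ℝ) j : EuclideanSpace ℝ (Fin N) →L[ℝ] ℝ).hasFDerivAt (x := x)
  have h2 : HasFDerivAt (fun x : EuclideanSpace ℝ (Fin N) => x j) _ x := this
  rw [h2.fderiv]
  simp

lemma sum_sq (x : EuclideanSpace ℝ (Fin N)) : ∑ j, x j * x j = ‖x‖ * ‖x‖ := by
  rw [← sq, EuclideanSpace.norm_sq_eq]; simp [sq]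

lemma coe_sum' (F : Fin N → SmF N) (x) : (∑ j, F j).1 x = ∑ j, (F j).1 x := by
  simp

/-- Eigenvalue of the Laplacian. -/
def lam (N : ℕ) (s : ℝ) : ℝ := s * (s + N - 2)

lemma Lap_rho (s : ℝ) : Lap N (rho N s) = lam N s • rho N (s-2) := by
  rw [Lap_apply]
  refine ext' fun x hx => ?_
  have hr : 0 < ‖x‖ := by simpa using hx
  simp only [D_rho, map_smul, D_M_apply, D_X, coe_sum', Submodule.coe_smul, Pi.smul_apply,
    Submodule.coe_add, Pi.add_apply, M_apply, X_apply _ hx, rho_apply _ hx, smul_eq_mul]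
  have e : ‖x‖ ^ (s-2) = ‖x‖ ^ (s-2-2) * (‖x‖ * ‖x‖) := by
    rw [← mul_assoc, ← Real.rpow_add_one hr.ne', ← Real.rpow_add_one hr.ne']; congr 1; ring
  calc _ = ∑ j : Fin N, (s * ‖x‖ ^ (s-2) + s * (s-2) * ‖x‖ ^ (s-2-2) * (x j * x j)) := by
        refine Finset.sum_congr rfl fun j _ => ?_
        rw [Real.rpow_zero]; ring
    _ = _ := by
        rw [Finset.sum_add_distrib, ← Finset.mul_sum _ _ (s * (s-2) * ‖x‖ ^ (s-2-2)), sum_sq]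
        simp [lam]; rw [e]; ring

lemma Lap_lg : Lap N (lg N) = ((N:ℝ) - 2) • rho N (-2) := by
  rw [Lap_apply]
  refine ext' fun x hx => ?_
  have hr : 0 < ‖x‖ := by simpa using hx
  simp only [D_lg, D_rho, map_smul, D_M_apply, D_X, coe_sum', Submodule.coe_smul, Pi.smul_apply,
    Submodule.coe_add, Pi.add_apply, M_apply, X_apply _ hx, rho_apply _ hx, smul_eq_mul]
  have e : ‖x‖ ^ (-2:ℝ) = ‖x‖ ^ (-2-2:ℝ) * (‖x‖ * ‖x‖) := by
    rw [← mul_assoc, ← Real.rpow_add_one hr.ne', ← Real.rpow_add_one hr.ne']; congr 1; ring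
  calc _ = ∑ j : Fin N, (‖x‖ ^ (-2:ℝ) + (-2) * ‖x‖ ^ (-2-2:ℝ) * (x j * x j)) := by
        refine Finset.sum_congr rfl fun j _ => ?_
        rw [Real.rpow_zero]; ring
    _ = _ := by
        rw [Finset.sum_add_distrib, ← Finset.mul_sum, sum_sq]
        simp only [Finset.sum_const, Finset.card_univ, Fintype.card_fin, nsmul_eq_mul]
        rw [e]; ring

lemma M_rho_rho (a b : ℝ) : M (rho N a) (rho N b) = rho N (a+b) := by
  refine ext' fun x hx => ?_
  have hr : 0 < ‖x‖ := by simpa using hx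
  rw [M_apply, rho_apply _ hx, rho_apply _ hx, rho_apply _ hx, Real.rpow_add hr]

lemma Lap_rho_lg (s : ℝ) : Lap N (M (rho N s) (lg N)) =
    lam N s • M (rho N (s-2)) (lg N) + (2*s+N-2) • rho N (s-2) := by
  have h : Lap N (M (rho N s) (lg N)) = M (Lap N (rho N s)) (lg N)
      + (2:ℝ) • (∑ j, M (D j (rho N s)) (D j (lg N))) + M (rho N s) (Lap N (lg N)) := by
    simp only [Lap_apply, map_sum, D_M_apply, map_add, LinearMap.sum_apply, Finset.smul_sum,
      ← Finset.sum_add_distrib]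
    refine Finset.sum_congr rfl fun j _ => ?_
    rw [two_smul]; abel
  have h2 : ∑ j, M (D j (rho N s)) (D j (lg N)) = s • rho N (s-2) := by
    refine ext' fun x hx => ?_
    have hr : 0 < ‖x‖ := by simpa using hx
    simp only [D_lg, D_rho, map_smul, LinearMap.smul_apply, coe_sum', Submodule.coe_smul,
      Pi.smul_apply, M_apply, X_apply _ hx, rho_apply _ hx, smul_eq_mul]
    have e : ‖x‖ ^ (-2:ℝ) * (‖x‖ * ‖x‖) = 1 := by
      rw [← mul_assoc, ← Real.rpow_add_one hr.ne', ← Real.rpow_add_one hr.ne']; norm_num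
    calc _ = ∑ j : Fin N, (s * ‖x‖ ^ (s-2) * ‖x‖ ^ (-2:ℝ)) * (x j * x j) := by
          refine Finset.sum_congr rfl fun j _ => ?_
          ring
      _ = s * ‖x‖ ^ (s-2) * (‖x‖ ^ (-2:ℝ) * (‖x‖ * ‖x‖)) := by
          rw [← Finset.mul_sum, sum_sq]; ring
      _ = _ := by rw [e, mul_one]
  rw [h, h2, Lap_rho, Lap_lg, map_smul, map_smul, M_rho_rho, LinearMap.smul_apply, smul_smul,
    add_assoc, ← sub_eq_add_neg, ← add_smul]
  congr 2; ring

/-- The symbol of `Pop k (rho a)` on powers of the norm. -/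
def sym (N : ℕ) : ℕ → ℝ → ℝ → ℝ
  | 0, _, _ => 1
  | k+1, a, s => (lam N (s+a-2*k) * sym N k a s + lam N s * sym N k a (s-2)
      - lam N a * sym N k (a-2) s) / 2

lemma sym_symm (k : ℕ) : ∀ a s s' : ℝ, s + s' = 2*k - a - N → sym N k a s = sym N k a s' := by
  induction k with
  | zero => intros; rfl
  | succ k ih =>
    intro a s s' h
    push_cast at h
    have hs : s' = 2*k + 2 - a - N - s := by linarith
    simp only [sym]
    rw [ih a s (s'-2) (by linarith), ih a (s-2) s' (by linarith), ih (a-2) s s' (by linarith)]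
    have h1 : lam N (s+a-2*k) = lam N s' := by rw [hs]; simp only [lam]; ring
    have h2 : lam N (s'+a-2*k) = lam N s := by rw [hs]; simp only [lam]; ring
    rw [h1, h2]; ring

lemma sym_zero (k : ℕ) : ∀ a : ℝ, sym N (k+1) a 0 = 0 := by
  induction k with
  | zero => intro a; simp [sym, lam]
  | succ k ih =>
    intro a
    rw [sym, ih, ih]; simp [lam]

lemma sym_diff (k : ℕ) : ∀ a : ℝ, Differentiable ℝ (sym N k a) := by
  induction k with
  | zero => intro a; exact differentiable_const _
  | succ k ih =>
    intro a
    have e : sym N (k+1) a = fun s => (lam N (s+a-2*k) * sym N k a s + lam N s * sym N k a (s-2)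
      - lam N a * sym N k (a-2) s) / 2 := rfl
    rw [e]
    have := ih a
    have := ih (a-2)
    unfold lam
    fun_prop

lemma sym_deriv (k : ℕ) (a : ℝ) : deriv (sym N (k+1) a) 0 =
    ((2*(a-2*k)+N-2) * sym N k a 0 + lam N (a-2*k) * deriv (sym N k a) 0
      + (N-2) * sym N k a (-2) - lam N a * deriv (sym N k (a-2)) 0) / 2 := by
  have e : sym N (k+1) a = fun s => (lam N (s+a-2*k) * sym N k a s + lam N s * sym N k a (s-2)
      - lam N a * sym N k (a-2) s) / 2 := rfl
  rw [e]
  have hl : ∀ s, HasDerivAt (lam N) (2*s+N-2) s := by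
    intro s
    have := (hasDerivAt_id s).mul (((hasDerivAt_id s).add_const (N:ℝ)).sub_const 2)
    refine this.congr_deriv ?_
    simp; ring
  have h1 : HasDerivAt (fun s => lam N (s+a-2*k)) (2*(a-2*k)+N-2) 0 := by
    have := (hl (0+a-2*k)).comp (0:ℝ) (((hasDerivAt_id (0:ℝ)).add_const a).sub_const (2*(k:ℝ)))
    refine this.congr_deriv ?_
    simp
  have h2 := (sym_diff (N := N) k a 0).hasDerivAt
  have h3 : HasDerivAt (fun s => sym N k a (s-2)) (deriv (sym N k a) (0-2)) 0 := by
    have := (sym_diff (N := N) k a (0-2)).hasDerivAt.comp (0:ℝ) ((hasDerivAt_id (0:ℝ)).sub_const 2)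
    refine this.congr_deriv ?_
    simp
  have h4 := (sym_diff (N := N) k (a-2) 0).hasDerivAt
  have := ((((h1.mul h2).add ((hl 0).mul h3)).sub (h4.const_mul (lam N a))).div_const 2).deriv
  refine Eq.trans this ?_
  simp [lam]

lemma Pop_apply_rec (k : ℕ) (a : ℝ) (f : SmF N) : Pop (k+1) (rho N a) f =
    (1/2:ℝ) • (Lap N (Pop k (rho N a) f) + Pop k (rho N a) (Lap N f)
      - lam N a • Pop k (rho N (a-2)) f) := by
  have := congrArg (fun T => T f) (Pop_rec k (rho N a))
  simp only [LinearMap.smul_apply, LinearMap.add_apply,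
    Module.End.mul_apply, Lap_rho, Pop_smul] at this
  rw [← this]
  module

lemma Pop_rho (k : ℕ) : ∀ a s : ℝ,
    Pop k (rho N a) (rho N s) = sym N k a s • rho N (s+a-2*k) := by
  induction k with
  | zero => intro a s; simp [Pop, sym, M_rho_rho, add_comm]
  | succ k ih =>
    intro a s
    rw [Pop_apply_rec, Lap_rho, map_smul, ih, ih, ih, map_smul, Lap_rho]
    have e1 : s + a - 2*k - 2 = s + a - 2*((k+1:ℕ):ℝ) := by push_cast; ring
    have e2 : s - 2 + a - 2*k = s + a - 2*((k+1:ℕ):ℝ) := by push_cast; ring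
    have e3 : s + (a - 2) - 2*k = s + a - 2*((k+1:ℕ):ℝ) := by push_cast; ring
    rw [e1, e2, e3]
    simp only [sym]
    module

lemma Pop_lg (k : ℕ) : ∀ a : ℝ,
    Pop k (rho N a) (lg N) = sym N k a 0 • M (rho N (a-2*k)) (lg N)
      + deriv (sym N k a) 0 • rho N (a-2*k) := by
  induction k with
  | zero =>
    intro a
    have : sym N 0 a = fun _ => 1 := rfl
    simp [Pop, this]
  | succ k ih =>
    intro a
    rw [Pop_apply_rec, Lap_lg, map_smul, ih, ih, Pop_rho, map_add, map_smul, map_smul, Lap_rho,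
      Lap_rho_lg, sym_deriv]
    have e1 : a - 2*k - 2 = a - 2*((k+1:ℕ):ℝ) := by push_cast; ring
    have e2 : - 2 + a - 2*k = a - 2*((k+1:ℕ):ℝ) := by push_cast; ring
    have e3 : (a - 2) - 2*k = a - 2*((k+1:ℕ):ℝ) := by push_cast; ring
    rw [e1, e2, e3]
    have e4 : lam N 0 = 0 := by simp [lam]
    simp only [sym, e4, zero_add]
    module

lemma Pop_final (hN : 1 ≤ N) : Pop N (rho N N) (lg N) = 0 := by
  have h0 : sym N N N 0 = 0 := by
    obtain ⟨k, hk⟩ : ∃ k, N = k + 1 := ⟨N - 1, by omega⟩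
    have := sym_zero (N := N) k N
    rwa [← hk] at this
  have h1 : deriv (sym N N N) 0 = 0 := by
    have ev : sym N N N = fun s => sym N N N (-s) := by
      funext s
      exact sym_symm N N s (-s) (by ring)
    have h := deriv_comp_neg (sym N N N) 0
    rw [← ev, neg_zero] at h
    linarith
  rw [Pop_lg, h0, h1]; simp

/-- Composition of partial derivatives. -/
def W : (m : ℕ) → (Fin m → Fin N) → Module.End ℝ (SmF N)
  | 0, _ => 1
  | m+1, i => D (i 0) * W m (Fin.tail i)

lemma W_comm (j : Fin N) (m : ℕ) : ∀ i : Fin m → Fin N, W m i * D j = D j * W m i := by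
  induction m with
  | zero => intro i; simp [W]
  | succ m ih =>
    intro i
    rw [W, mul_assoc, ih, ← mul_assoc, D_comm, mul_assoc]

lemma sum_W (g : SmF N) (m : ℕ) : ∑ i : Fin m → Fin N, W m i * M g * W m i = Pop m g := by
  induction m with
  | zero => simp [W, Pop]
  | succ m ih =>
    rw [Pop, ← ih, ← (Fin.consEquiv fun _ => Fin N).sum_comp, Fintype.sum_prod_type]
    refine Finset.sum_congr rfl fun j _ => ?_
    rw [Finset.mul_sum, Finset.sum_mul]
    refine Finset.sum_congr rfl fun i _ => ?_
    simp only [W, Fin.consEquiv, Equiv.coe_fn_mk, Fin.cons_zero, Fin.tail_cons]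
    simp only [mul_assoc]
    rw [W_comm]

lemma mixed_eq (f : SmF N) (m : ℕ) : ∀ (i : Fin m → Fin N) (x), x ≠ 0 →
    mixedPartial N m f.1 i x = (W m i f).1 x := by
  induction m with
  | zero => intro i x hx; simp [mixedPartial, W]
  | succ m ih =>
    intro i x hx
    have hd : DifferentiableAt ℝ (iteratedFDeriv ℝ m f.1) x :=
      (f.2.2 x hx).differentiableAt_iteratedFDeriv (by exact_mod_cast WithTop.coe_lt_top _)
    have ev : (W m (Fin.tail i) f).1 =ᶠ[nhds x] fun y => mixedPartial N m f.1 (Fin.tail i) y := by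
      filter_upwards [isOpen_ne.mem_nhds hx] with y hy
      exact (ih _ y hy).symm
    rw [W, Module.End.mul_apply, D_apply _ _ hx, ev.fderiv_eq]
    unfold mixedPartial
    rw [iteratedFDeriv_succ_apply_left]
    have h := (hd.hasFDerivAt.continuousMultilinear_apply_const
      (fun k => EuclideanSpace.single (Fin.tail i k) 1)).fderiv
    rw [h]
    rfl

lemma mixed_eq' (u : EuclideanSpace ℝ (Fin N) → ℝ) (f : SmF N) (h : ∀ x, x ≠ 0 → u x = f.1 x)
    (m : ℕ) (i : Fin m → Fin N) (x) (hx : x ≠ 0) : mixedPartial N m u i x = (W m i f).1 x := by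
  rw [← mixed_eq f m i x hx]
  have : u =ᶠ[nhds x] f.1 := by
    filter_upwards [isOpen_ne.mem_nhds hx] with y hy
    exact h y hy
  unfold mixedPartial
  rw [(Filter.EventuallyEq.iteratedFDeriv ℝ this m).eq_of_nhds]

end SmF

/-- away from the origin, `log|x|` solves
`∑_{i_1,…,i_N} ∂^N(|x|^N ∂^N log|x|/∂x_{i_1}⋯∂x_{i_N})/∂x_{i_1}⋯∂x_{i_N} = 0` pointwise. -/
theorem statement5 (N : ℕ) (hN : 1 ≤ N)
    (x : EuclideanSpace ℝ (Fin N)) (hx : x ≠ 0) :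
    ∑ i : Fin N → Fin N,
      mixedPartial N N (fun y => ‖y‖ ^ N * mixedPartial N N (logNorm N) i y) i x = 0 := by
  have h := SmF.Pop_final hN
  rw [← SmF.sum_W] at h
  have h2 := congrArg (fun f : SmF N => f.1 x) h
  simp only [LinearMap.sum_apply] at h2
  have h3 : (∑ i : Fin N → Fin N,
      (SmF.W N i * SmF.M (SmF.rho N N) * SmF.W N i) (SmF.lg N)).1 x = 0 := h2
  rw [AddSubmonoidClass.coe_finsetSum, Finset.sum_apply] at h3
  rw [← h3]
  refine Finset.sum_congr rfl fun i _ => ?_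
  refine SmF.mixed_eq' _ (SmF.M (SmF.rho N N) (SmF.W N i (SmF.lg N))) ?_ N i x hx
  intro y hy
  rw [SmF.M_apply, SmF.rho_apply _ hy, Real.rpow_natCast,
    SmF.mixed_eq' (logNorm N) (SmF.lg N) (fun z hz => (SmF.lg_apply hz).symm) N i y hy]
end
end

section
/- Let N ≥ 1. Then for every u ∈ C_c^∞(ℝ^N) (smooth, compactly supported, real-valued), ‖u‖_∞ ≤ (√(ℓ_N) · ω_{N−1})^{−1} ∫_{ℝ^N} |∇^N u(x)| dx, where ‖u‖_∞ is the supremum norm of u. -/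
open MeasureTheory Metric Filter Matrix

noncomputable section

open scoped ContDiff Topology

abbrev EN (N : ℕ) := EuclideanSpace ℝ (Fin N)

lemma mp_congr {N m : ℕ} {u w : EN N → ℝ} {x : EN N} (h : u =ᶠ[𝓝 x] w) (i : Fin m → Fin N) :
    mixedPartial N m u i x = mixedPartial N m w i x := by
  unfold mixedPartial
  rw [(h.iteratedFDeriv ℝ m).eq_of_nhds]

lemma mp_contDiffAt {N m : ℕ} {u : EN N → ℝ} {x : EN N} (h : ContDiffAt ℝ ∞ u x)
    (i : Fin m → Fin N) : ContDiffAt ℝ ∞ (mixedPartial N m u i) x := by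
  have h1 : ContDiffAt ℝ ∞ (iteratedFDeriv ℝ m u) x := by
    apply h.iteratedFDeriv_right
    exact_mod_cast le_top
  unfold mixedPartial
  exact (ContinuousMultilinearMap.apply ℝ (fun _ : Fin m => EN N) ℝ
    (fun k => EuclideanSpace.single (i k) 1)).contDiff.contDiffAt.comp x h1

lemma mp_contDiff {N m : ℕ} {u : EN N → ℝ} (h : ContDiff ℝ ∞ u)
    (i : Fin m → Fin N) : ContDiff ℝ ∞ (mixedPartial N m u i) :=
  contDiff_iff_contDiffAt.2 fun _ => mp_contDiffAt h.contDiffAt i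

lemma itf_equiv {N m : ℕ} (g : EN N ≃L[ℝ] EN N) (u : EN N → ℝ) (x : EN N) (v : Fin m → EN N) :
    iteratedFDeriv ℝ m (fun y => u (g y)) x v = iteratedFDeriv ℝ m u (g x) (fun k => g (v k)) := by
  have := g.iteratedFDerivWithin_comp_right (f := u) (s := Set.univ) uniqueDiffOn_univ
    (x := x) (Set.mem_univ _) m
  simp only [Set.preimage_univ, iteratedFDerivWithin_univ] at this
  change iteratedFDeriv ℝ m (u ∘ g) x v = _
  rw [this]
  rfl

lemma mp_scale {N m : ℕ} (l : ℝ) (hl : l ≠ 0) (u : EN N → ℝ) (i : Fin m → Fin N) (x : EN N) :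
    mixedPartial N m (fun y => u (l • y)) i x = l ^ m * mixedPartial N m u i (l • x) := by
  have := itf_equiv (m := m) (ContinuousLinearEquiv.smulLeft (Units.mk0 l hl)) u x
    (fun k => EuclideanSpace.single (i k) 1)
  unfold mixedPartial
  refine this.trans ?_
  have h2 := (iteratedFDeriv ℝ m u (l • x)).map_smul_univ (fun _ => l)
    (fun k => EuclideanSpace.single (i k) 1)
  simp only [Finset.prod_const, Finset.card_univ, Fintype.card_fin, smul_eq_mul] at h2
  rw [← h2]
  rfl

lemma mp_add_const {N m : ℕ} (hm : m ≠ 0) (c : ℝ) {u : EN N → ℝ} {x : EN N}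
    (h : ContDiffAt ℝ ∞ u x) (i : Fin m → Fin N) :
    mixedPartial N m (fun y => u y + c) i x = mixedPartial N m u i x := by
  unfold mixedPartial
  have := fun_iteratedFDeriv_add_apply (i := m) (f := u) (g := fun _ => c) (x := x)
    (h.of_le (by exact_mod_cast le_top)) contDiffAt_const
  rw [this, iteratedFDeriv_const_of_ne hm]
  simp

lemma mp_sub {N m : ℕ} {u w : EN N → ℝ} {x : EN N}
    (h : ContDiffAt ℝ ∞ u x) (h' : ContDiffAt ℝ ∞ w x) (i : Fin m → Fin N) :
    mixedPartial N m (fun y => u y - w y) i x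
      = mixedPartial N m u i x - mixedPartial N m w i x := by
  unfold mixedPartial
  rw [fun_iteratedFDeriv_sub_apply (h.of_le (by exact_mod_cast le_top))
    (h'.of_le (by exact_mod_cast le_top))]
  rfl

lemma frob_rot {N m : ℕ} (A B : ContinuousMultilinearMap ℝ (fun _ : Fin m => EN N) ℝ)
    (R : EN N ≃ₗᵢ[ℝ] EN N) :
    ∑ i : Fin m → Fin N, A (fun k => R (EuclideanSpace.single (i k) 1)) *
        B (fun k => R (EuclideanSpace.single (i k) 1))
      = ∑ i : Fin m → Fin N, A (fun k => EuclideanSpace.single (i k) 1) *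
        B (fun k => EuclideanSpace.single (i k) 1) := by
  set M : Fin N → Fin N → ℝ := fun j a => (R (EuclideanSpace.single a 1)) j with hM
  have hR : ∀ a, R (EuclideanSpace.single a 1) = ∑ j, M j a • EuclideanSpace.single j (1 : ℝ) := by
    intro a
    ext j
    simp [hM, Pi.single_apply]
  have horth : ∀ j j', ∑ a, M j a * M j' a = if j = j' then 1 else 0 := by
    intro j j'
    have h := ((EuclideanSpace.basisFun (Fin N) ℝ).map R).sum_inner_mul_inner
      (EuclideanSpace.single j (1 : ℝ)) (EuclideanSpace.single j' (1 : ℝ))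
    simp only [OrthonormalBasis.map_apply, EuclideanSpace.basisFun_apply,
      EuclideanSpace.inner_single_left, EuclideanSpace.inner_single_right] at h
    simpa [hM, Pi.single_apply, eq_comm] using h
  have hexp : ∀ (C : ContinuousMultilinearMap ℝ (fun _ : Fin m => EN N) ℝ) (i : Fin m → Fin N),
      C (fun k => R (EuclideanSpace.single (i k) 1)) =
        ∑ j : Fin m → Fin N, (∏ k, M (j k) (i k)) * C (fun k => EuclideanSpace.single (j k) 1) := by
    intro C i
    simp only [hR]
    rw [ContinuousMultilinearMap.map_sum]
    refine Finset.sum_congr rfl fun j _ => ?_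
    rw [ContinuousMultilinearMap.map_smul_univ, smul_eq_mul]
  have hd : ∀ j j' : Fin m → Fin N,
      ∑ i : Fin m → Fin N, (∏ k, M (j k) (i k)) * (∏ k, M (j' k) (i k))
        = if j = j' then 1 else 0 := by
    intro j j'
    simp only [← Finset.prod_mul_distrib]
    have := (Fintype.prod_sum (fun (k : Fin m) (a : Fin N) => M (j k) a * M (j' k) a)).symm
    rw [this]
    simp only [horth]
    by_cases hjj : j = j'
    · simp [hjj]
    · rw [if_neg hjj]
      obtain ⟨k, hk⟩ := Function.ne_iff.1 hjj
      exact Finset.prod_eq_zero (Finset.mem_univ k) (by simp [hk])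
  simp only [hexp]
  simp only [Finset.sum_mul_sum]
  rw [Finset.sum_comm]
  refine Finset.sum_congr rfl fun j _ => ?_
  rw [Finset.sum_comm]
  have : ∀ j' : Fin m → Fin N, ∑ i : Fin m → Fin N,
      (∏ k, M (j k) (i k)) * A (fun k => EuclideanSpace.single (j k) 1) *
        ((∏ k, M (j' k) (i k)) * B (fun k => EuclideanSpace.single (j' k) 1))
      = (if j = j' then 1 else 0) * (A (fun k => EuclideanSpace.single (j k) 1) *
        B (fun k => EuclideanSpace.single (j' k) 1)) := by
    intro j'
    rw [← hd j j', Finset.sum_mul]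
    exact Finset.sum_congr rfl fun i _ => by ring
  simp [this]

lemma mp_rot {N m : ℕ} (u w : EN N → ℝ) (R : EN N ≃ₗᵢ[ℝ] EN N) (x : EN N) :
    ∑ i : Fin m → Fin N, mixedPartial N m (fun y => u (R y)) i x *
        mixedPartial N m (fun y => w (R y)) i x
      = ∑ i : Fin m → Fin N, mixedPartial N m u i (R x) * mixedPartial N m w i (R x) := by
  unfold mixedPartial
  rw [← frob_rot (iteratedFDeriv ℝ m u (R x)) (iteratedFDeriv ℝ m w (R x)) R]
  refine Finset.sum_congr rfl fun i _ => ?_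
  exact congrArg₂ _ (itf_equiv R.toContinuousLinearEquiv u x _)
    (itf_equiv R.toContinuousLinearEquiv w x _)

/-- derivative in a basis direction -/
def pd (N : ℕ) (a : Fin N) (u : EN N → ℝ) (x : EN N) : ℝ :=
  fderiv ℝ u x (EuclideanSpace.single a 1)

lemma pd_contDiff {N : ℕ} (a : Fin N) {u : EN N → ℝ} (h : ContDiff ℝ ∞ u) :
    ContDiff ℝ ∞ (pd N a u) := by
  unfold pd
  exact (h.fderiv_right (m := ∞) (by simp)).clm_apply contDiff_const

lemma pd_supp {N : ℕ} (a : Fin N) {u : EN N → ℝ} (h : HasCompactSupport u) :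
    HasCompactSupport (pd N a u) := h.fderiv_apply ℝ _

lemma mp_zero {N : ℕ} (u : EN N → ℝ) (i : Fin 0 → Fin N) : mixedPartial N 0 u i = u := by
  ext x; simp [mixedPartial]

lemma mp_succ_left {N m : ℕ} {u : EN N → ℝ} {x : EN N} (h : ContDiffAt ℝ ∞ u x)
    (i : Fin (m+1) → Fin N) :
    mixedPartial N (m+1) u i x = pd N (i 0) (mixedPartial N m u (fun k => i k.succ)) x := by
  have h1 : DifferentiableAt ℝ (iteratedFDeriv ℝ m u) x := by
    have : ContDiffAt ℝ ∞ (iteratedFDeriv ℝ m u) x := by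
      apply h.iteratedFDeriv_right
      exact_mod_cast le_top
    exact this.differentiableAt (by simp)
  unfold pd mixedPartial
  rw [iteratedFDeriv_succ_apply_left]
  have := ((ContinuousMultilinearMap.apply ℝ (fun _ : Fin m => EN N) ℝ
    (fun k => EuclideanSpace.single (i k.succ) 1)).hasFDerivAt.comp x h1.hasFDerivAt).fderiv
  have h3 : fderiv ℝ (fun x => iteratedFDeriv ℝ m u x
    (fun k => EuclideanSpace.single (i k.succ) 1)) x = _ := this
  rw [h3]
  rfl

lemma mp_succ_right {N m : ℕ} {u : EN N → ℝ} (h : ContDiff ℝ ∞ u) (x : EN N)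
    (i : Fin (m+1) → Fin N) :
    mixedPartial N (m+1) u i x =
      mixedPartial N m (pd N (i (Fin.last m)) u) (fun k => i k.castSucc) x := by
  unfold pd mixedPartial
  rw [iteratedFDeriv_succ_apply_right]
  have h1 : ContDiff ℝ ∞ (fderiv ℝ u) := h.fderiv_right (by simp)
  rw [iteratedFDeriv_clm_apply_const_apply (c := fderiv ℝ u) (n := ∞) h1
    (by exact_mod_cast le_top)]
  rfl

lemma mp_supp {N m : ℕ} {u : EN N → ℝ} (h : HasCompactSupport u)
    (i : Fin m → Fin N) : HasCompactSupport (mixedPartial N m u i) := by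
  have := h.iteratedFDeriv (𝕜 := ℝ) m
  exact this.comp_left (g := fun A => A (fun k => EuclideanSpace.single (i k) 1)) rfl

lemma ibp1 {N : ℕ} (a : Fin N) {u w : EN N → ℝ} (hu : ContDiff ℝ ∞ u) (hw : ContDiff ℝ ∞ w)
    (hc : HasCompactSupport u ∨ HasCompactSupport w) :
    ∫ x, pd N a u x * w x = - ∫ x, u x * pd N a w x := by
  have h3 : HasCompactSupport (fun x => pd N a u x * w x) := by
    rcases hc with h | h
    · exact (pd_supp a h).mul_right
    · exact h.mul_left
  have h4 : HasCompactSupport (fun x => u x * pd N a w x) := by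
    rcases hc with h | h
    · exact h.mul_right
    · exact (pd_supp a h).mul_left
  have h5 : HasCompactSupport (fun x => u x * w x) := by
    rcases hc with h | h
    · exact h.mul_right
    · exact h.mul_left
  have := integral_mul_fderiv_eq_neg_fderiv_mul_of_integrable (μ := (volume : Measure (EN N)))
    (f := u) (g := w) (v := EuclideanSpace.single a 1)
    (((pd_contDiff a hu).continuous.mul hw.continuous).integrable_of_hasCompactSupport h3)
    ((hu.continuous.mul (pd_contDiff a hw).continuous).integrable_of_hasCompactSupport h4)
    ((hu.continuous.mul hw.continuous).integrable_of_hasCompactSupport h5)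
    (fun x _ => (hu.differentiable (by simp)).differentiableAt)
    (fun x _ => (hw.differentiable (by simp)).differentiableAt)
  unfold pd
  rw [this, neg_neg]

lemma ibp {N m : ℕ} (i : Fin m → Fin N) : ∀ {u w : EN N → ℝ}, ContDiff ℝ ∞ u → ContDiff ℝ ∞ w →
    (HasCompactSupport u ∨ HasCompactSupport w) →
    ∫ x, mixedPartial N m u i x * w x
      = ∫ x, u x * ((-1) ^ m * mixedPartial N m w (fun k => i k.rev) x) := by
  induction m with
  | zero => intro u w _ _ _; simp [mp_zero]
  | succ m ih =>
    intro u w hu hw hc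
    have h1 : ∀ x, mixedPartial N (m+1) u i x
        = pd N (i 0) (mixedPartial N m u (fun k => i k.succ)) x :=
      fun x => mp_succ_left hu.contDiffAt i
    simp only [h1]
    rw [ibp1 (i 0) (mp_contDiff hu _) hw (hc.imp_left fun h => mp_supp h _),
      ih (fun k => i k.succ) hu (pd_contDiff _ hw) (hc.imp_right fun h => pd_supp _ h),
      ← integral_neg]
    refine integral_congr_ae (Filter.Eventually.of_forall fun x => ?_)
    simp only
    rw [mp_succ_right hw]
    simp only [Fin.rev_last, Fin.rev_castSucc]
    ring

/-- radial smooth cutoff -/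
def chi (N : ℕ) (x : EN N) : ℝ := Real.smoothTransition (4 * ‖x‖ ^ 2 - 1)

lemma chi_contDiff (N : ℕ) : ContDiff ℝ ∞ (chi N) := by
  unfold chi
  exact Real.smoothTransition.contDiff.comp
    ((contDiff_const.mul (contDiff_norm_sq ℝ)).sub contDiff_const)

lemma chi_zero {N : ℕ} {x : EN N} (h : ‖x‖ ≤ 1/2) : chi N x = 0 := by
  apply Real.smoothTransition.zero_of_nonpos
  nlinarith [norm_nonneg x]

lemma chi_one {N : ℕ} {x : EN N} (h : 3/4 ≤ ‖x‖) : chi N x = 1 := by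
  apply Real.smoothTransition.one_of_one_le
  nlinarith [norm_nonneg x]

lemma chi_nonneg {N : ℕ} (x : EN N) : 0 ≤ chi N x := Real.smoothTransition.nonneg _
lemma chi_le {N : ℕ} (x : EN N) : chi N x ≤ 1 := Real.smoothTransition.le_one _

lemma logNorm_contDiffAt_s7 {N : ℕ} {x : EN N} (h : x ≠ 0) : ContDiffAt ℝ ∞ (logNorm N) x := by
  unfold logNorm
  exact (contDiffAt_norm ℝ h).log (norm_ne_zero_iff.2 h)

/-- the degree zero homogeneous tensor field -/
def VV (N : ℕ) (i : Fin N → Fin N) (x : EN N) : ℝ := ‖x‖ ^ N * mixedPartial N N (logNorm N) i x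

lemma VV_contDiffAt {N : ℕ} (i : Fin N → Fin N) {x : EN N} (h : x ≠ 0) :
    ContDiffAt ℝ ∞ (VV N i) x :=
  ((contDiffAt_norm ℝ h).pow N).mul (mp_contDiffAt (logNorm_contDiffAt_s7 h) i)

lemma mp_log_scale {N : ℕ} (hN : N ≠ 0) (i : Fin N → Fin N) {l : ℝ} (hl : 0 < l) {x : EN N}
    (hx : x ≠ 0) : l ^ N * mixedPartial N N (logNorm N) i (l • x)
      = mixedPartial N N (logNorm N) i x := by
  rw [← mp_scale l hl.ne', ← mp_add_const hN (Real.log l) (logNorm_contDiffAt_s7 hx)]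
  apply mp_congr
  filter_upwards [isOpen_ne.mem_nhds hx] with y hy
  unfold logNorm
  rw [norm_smul, Real.norm_of_nonneg hl.le, Real.log_mul hl.ne' (norm_ne_zero_iff.2 hy)]
  ring

lemma VV_zero {N : ℕ} (hN : N ≠ 0) (i : Fin N → Fin N) : VV N i 0 = 0 := by
  simp [VV, hN]

lemma VV_scale {N : ℕ} (hN : N ≠ 0) (i : Fin N → Fin N) {l : ℝ} (hl : 0 < l) (x : EN N) :
    VV N i (l • x) = VV N i x := by
  by_cases hx : x = 0
  · simp [hx]
  unfold VV
  rw [← mp_log_scale hN i hl hx, norm_smul, Real.norm_of_nonneg hl.le]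
  ring

lemma exists_rot {N : ℕ} {x y : EN N} (h : ‖x‖ = ‖y‖) : ∃ R : EN N ≃ₗᵢ[ℝ] EN N, R x = y :=
  ⟨_, Submodule.reflection_sub h⟩

lemma sum_log_sq_rot {N : ℕ} (R : EN N ≃ₗᵢ[ℝ] EN N) (x : EN N) :
    ∑ i : Fin N → Fin N, mixedPartial N N (logNorm N) i (R x) ^ 2
      = ∑ i : Fin N → Fin N, mixedPartial N N (logNorm N) i x ^ 2 := by
  simp only [sq]
  rw [← mp_rot]
  simp [logNorm]
  rfl

lemma sum_VV_sq {N : ℕ} (hN : 0 < N) {x : EN N} (hx : x ≠ 0) :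
    ∑ i : Fin N → Fin N, VV N i x ^ 2 = ell N hN := by
  have hn : 0 < ‖x‖ := norm_pos_iff.2 hx
  have h1 : ∀ i, VV N i x = VV N i (‖x‖⁻¹ • x) := fun i => (VV_scale hN.ne' i (inv_pos.2 hn) x).symm
  have h2 : ‖‖x‖⁻¹ • x‖ = 1 := by
    rw [norm_smul, norm_inv, norm_norm, inv_mul_cancel₀ hn.ne']
  obtain ⟨R, hR⟩ := exists_rot (x := EuclideanSpace.single (⟨0, hN⟩ : Fin N) (1:ℝ))
    (y := ‖x‖⁻¹ • x) (by rw [h2]; simp)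
  simp only [h1]
  unfold VV
  simp only [h2, one_pow, one_mul]
  rw [← hR, sum_log_sq_rot]
  rfl

/-- the truncated field -/
def WW (N : ℕ) (i : Fin N → Fin N) (x : EN N) : ℝ := chi N x * VV N i x

lemma contDiff_cut {N : ℕ} {f : EN N → ℝ} (hf : ∀ x, x ≠ 0 → ContDiffAt ℝ ∞ f x) :
    ContDiff ℝ ∞ (fun x => chi N x * f x) := by
  rw [contDiff_iff_contDiffAt]
  intro x
  by_cases hx : x = 0
  · have : (fun x => chi N x * f x) =ᶠ[𝓝 x] fun _ => 0 := by
      filter_upwards [ball_mem_nhds x (show (0:ℝ) < 1/2 by norm_num)] with y hy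
      rw [hx, mem_ball_zero_iff] at hy
      simp [chi_zero hy.le]
    exact contDiffAt_const.congr_of_eventuallyEq this
  · exact (chi_contDiff N).contDiffAt.mul (hf x hx)

lemma WW_contDiff {N : ℕ} (i : Fin N → Fin N) : ContDiff ℝ ∞ (WW N i) :=
  contDiff_cut fun _ hx => VV_contDiffAt i hx

/-- pairing of `∇^N u` with the field -/
def SS (N : ℕ) (u : EN N → ℝ) (x : EN N) : ℝ := ∑ i : Fin N → Fin N, mixedPartial N N u i x * VV N i x

/-- distributional divergence of the truncated field -/
def HH (N : ℕ) (x : EN N) : ℝ :=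
  ∑ i : Fin N → Fin N, (-1) ^ N * mixedPartial N N (WW N i) (fun k => i k.rev) x

lemma HH_contDiff (N : ℕ) : ContDiff ℝ ∞ (HH N) := by
  unfold HH
  exact ContDiff.sum fun i _ => contDiff_const.mul (mp_contDiff (WW_contDiff i) _)

lemma SS_rot {N : ℕ} (u : EN N → ℝ) (R : EN N ≃ₗᵢ[ℝ] EN N) (x : EN N) :
    SS N (fun y => u (R y)) x = SS N u (R x) := by
  unfold SS VV
  have := mp_rot (m := N) u (logNorm N) R x
  have h2 : (fun y => logNorm N (R y)) = logNorm N := by ext y; simp [logNorm]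
  rw [h2] at this
  simp only [R.norm_map, mul_left_comm _ (‖x‖ ^ N), ← Finset.mul_sum, this]

lemma smul_contDiff {N : ℕ} (l : ℝ) {u : EN N → ℝ} (hu : ContDiff ℝ ∞ u) :
    ContDiff ℝ ∞ (fun x => u (l • x)) := hu.comp (contDiff_const_smul l)

lemma ibp_W {N : ℕ} (hN : N ≠ 0) {u : EN N → ℝ} (hu : ContDiff ℝ ∞ u) (hc : HasCompactSupport u)
    {l : ℝ} (hl : 0 < l) :
    ∫ x, chi N (l • x) * SS N u x = ∫ x, u x * (l ^ N * HH N (l • x)) := by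
  have e1 : ∀ x, chi N (l • x) * SS N u x
      = ∑ i : Fin N → Fin N, mixedPartial N N u i x * WW N i (l • x) := by
    intro x
    unfold SS WW
    rw [Finset.mul_sum]
    refine Finset.sum_congr rfl fun i _ => ?_
    rw [VV_scale hN i hl]; ring
  have e2 : ∀ x, u x * (l ^ N * HH N (l • x)) = ∑ i : Fin N → Fin N,
      u x * ((-1) ^ N * mixedPartial N N (fun y => WW N i (l • y)) (fun k => i k.rev) x) := by
    intro x
    unfold HH
    rw [Finset.mul_sum, Finset.mul_sum]
    refine Finset.sum_congr rfl fun i _ => ?_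
    rw [mp_scale l hl.ne']; ring
  simp only [e1, e2]
  have hW : ∀ i, ContDiff ℝ ∞ (fun x => WW N i (l • x)) := fun i => smul_contDiff l (WW_contDiff i)
  rw [integral_finsetSum, integral_finsetSum]
  · exact Finset.sum_congr rfl fun i _ => ibp i hu (hW i) (Or.inl hc)
  · intro i _
    exact (hu.continuous.mul (continuous_const.mul (mp_contDiff (hW i) _).continuous)
      ).integrable_of_hasCompactSupport hc.mul_right
  · intro i _
    exact ((mp_contDiff hu i).continuous.mul (hW i).continuous
      ).integrable_of_hasCompactSupport (mp_supp hc i).mul_right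

lemma HH_rot {N : ℕ} (hN : N ≠ 0) (R : EN N ≃ₗᵢ[ℝ] EN N) (x : EN N) : HH N (R x) = HH N x := by
  have hcont := (HH_contDiff N).continuous
  have hcR : Continuous fun x => HH N (R x) := hcont.comp R.continuous
  have key : ∀ g : EN N → ℝ, ContDiff ℝ ∞ g → HasCompactSupport g →
      ∫ x, g x * HH N (R x) = ∫ x, g x * HH N x := by
    intro g hg hgc
    set u : EN N → ℝ := fun y => g (R.symm y) with hu
    have hus : ContDiff ℝ ∞ u := hg.comp R.symm.contDiff
    have huc : HasCompactSupport u := hgc.comp_homeomorph R.symm.toHomeomorph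
    have h1 := ibp_W hN hg hgc one_pos
    have h2 := ibp_W hN hus huc one_pos
    simp only [one_smul, one_pow, one_mul] at h1 h2
    have hgu : g = fun y => u (R y) := by ext y; simp [hu]
    have h3 : ∀ x, chi N x * SS N g x = chi N (R x) * SS N u (R x) := by
      intro x
      rw [hgu, SS_rot]
      simp [chi]
    have mp := R.measurePreserving
    have me := R.toHomeomorph.measurableEmbedding
    have h4 := mp.integral_comp me (fun x => chi N x * SS N u x)
    have h5 := mp.integral_comp me (fun x => u x * HH N x)
    simp only [h3] at h1
    rw [← h1, h4, h2, ← h5]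
    simp [hu]
  have hae := ae_eq_of_integral_contDiff_smul_eq (μ := (volume : Measure (EN N)))
    (f := fun x => HH N (R x)) (f' := HH N)
    hcR.locallyIntegrable hcont.locallyIntegrable (fun g hg hgc => by
      simpa [smul_eq_mul] using key g hg hgc)
  exact congrFun ((hcR.ae_eq_iff_eq volume hcont).1 hae) x

lemma HH_scale {N : ℕ} (hN : N ≠ 0) {l : ℝ} (hl : 1 ≤ l) {x : EN N} (hx : 1 ≤ ‖x‖) :
    l ^ N * HH N (l • x) = HH N x := by
  unfold HH
  rw [Finset.mul_sum]
  refine Finset.sum_congr rfl fun i _ => ?_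
  rw [mul_left_comm, ← mp_scale l (by positivity)]
  congr 1
  apply mp_congr
  have : {y : EN N | 3/4 < ‖y‖} ∈ 𝓝 x :=
    (isOpen_lt continuous_const continuous_norm).mem_nhds (by simp; linarith)
  filter_upwards [this] with y hy
  have hy' : 3/4 < ‖y‖ := hy
  unfold WW
  rw [VV_scale hN i (by positivity), chi_one hy'.le, chi_one]
  rw [norm_smul, Real.norm_of_nonneg (by positivity)]
  nlinarith

lemma HH_far {N : ℕ} (hN : 0 < N) {x : EN N} (hx : 1 ≤ ‖x‖) :
    HH N x = HH N (EuclideanSpace.single (⟨0, hN⟩ : Fin N) 1) * (‖x‖ ^ N)⁻¹ := by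
  have hn : 0 < ‖x‖ := by linarith
  obtain ⟨R, hR⟩ := exists_rot (x := ‖x‖ • EuclideanSpace.single (⟨0, hN⟩ : Fin N) (1:ℝ))
    (y := x) (by rw [norm_smul]; simp)
  have h1 : HH N x = HH N (‖x‖ • EuclideanSpace.single (⟨0, hN⟩ : Fin N) (1:ℝ)) := by
    rw [← HH_rot hN.ne' R (‖x‖ • _), hR]
  rw [← HH_scale hN.ne' hx (x := EuclideanSpace.single (⟨0, hN⟩ : Fin N) (1:ℝ)) (by simp), ← h1]
  field_simp

lemma omega_pos {N : ℕ} (hN : 0 < N) : 0 < omegaSphere N := by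
  unfold omegaSphere
  have : 0 < (volume (ball (0 : EN N) 1)).toReal :=
    ENNReal.toReal_pos (measure_ball_pos volume _ one_pos).ne' measure_ball_lt_top.ne
  positivity

lemma shell_integral {N : ℕ} (hN : 0 < N) :
    ∫ x : EN N in ball 0 2 \ ball 0 1, (‖x‖ ^ N)⁻¹ = omegaSphere N * Real.log 2 := by
  have : Nonempty (Fin N) := ⟨⟨0, hN⟩⟩
  rw [← integral_indicator (measurableSet_ball.diff measurableSet_ball)]
  have h1 : ∀ x : EN N, (ball (0 : EN N) 2 \ ball 0 1).indicator (fun x => (‖x‖ ^ N)⁻¹) x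
      = (Set.Ico (1:ℝ) 2).indicator (fun r => (r ^ N)⁻¹) ‖x‖ := by
    intro x
    by_cases h : ‖x‖ ∈ Set.Ico (1:ℝ) 2
    · rw [Set.indicator_of_mem h, Set.indicator_of_mem]
      simpa [and_comm] using h
    · rw [Set.indicator_of_notMem h, Set.indicator_of_notMem]
      simpa [and_comm] using h
  simp only [h1]
  rw [integral_fun_norm_addHaar volume, finrank_euclideanSpace_fin]
  have h2 : ∀ y : ℝ, y ^ (N - 1) • (Set.Ico (1:ℝ) 2).indicator (fun r => (r ^ N)⁻¹) y
      = (Set.Ico (1:ℝ) 2).indicator (fun r => r⁻¹) y := by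
    intro y
    by_cases h : y ∈ Set.Ico (1:ℝ) 2
    · rw [Set.indicator_of_mem h, Set.indicator_of_mem h, smul_eq_mul]
      have hy : y ≠ 0 := by have := h.1; positivity
      obtain ⟨M, rfl⟩ : ∃ M, N = M + 1 := ⟨N - 1, by omega⟩
      simp only [Nat.add_sub_cancel]
      field_simp
      exact (pow_succ y M).symm
    · rw [Set.indicator_of_notMem h, Set.indicator_of_notMem h, smul_zero]
  simp only [h2]
  rw [setIntegral_indicator measurableSet_Ico]
  have h3 : Set.Ioi (0:ℝ) ∩ Set.Ico 1 2 = Set.Ico 1 2 := by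
    ext y; simp only [Set.mem_inter_iff, Set.mem_Ioi, Set.mem_Ico]
    constructor
    · exact fun h => h.2
    · exact fun h => ⟨by linarith [h.1], h⟩
  rw [h3, integral_Ico_eq_integral_Ioc, ← intervalIntegral.integral_of_le (by norm_num),
    integral_inv_of_pos (by norm_num) (by norm_num)]
  simp [omegaSphere, Measure.real, mul_assoc]

lemma scale_diff {N : ℕ} (hN : 0 < N) {G : EN N → ℝ} (hG : Continuous G) {c : ℝ}
    (hfar : ∀ x, 1 ≤ ‖x‖ → G x = c * (‖x‖ ^ N)⁻¹) :
    ∫ x, (2 ^ N * G ((2:ℝ) • x) - G x) = c * (omegaSphere N * Real.log 2) := by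
  have h0 : ∀ x, x ∉ ball (0 : EN N) 1 → (2 ^ N * G ((2:ℝ) • x) - G x) = 0 := by
    intro x hx
    have hx1 : 1 ≤ ‖x‖ := by simpa using hx
    have hx2 : ‖(2:ℝ) • x‖ = 2 * ‖x‖ := by rw [norm_smul]; simp
    rw [hfar x hx1, hfar _ (by rw [hx2]; linarith), hx2, mul_pow, mul_inv]
    have : (2:ℝ)^N ≠ 0 := by positivity
    field_simp
    ring
  rw [← setIntegral_eq_integral_of_forall_compl_eq_zero h0]
  have hint : ∀ (F : EN N → ℝ), Continuous F → ∀ r, IntegrableOn F (ball 0 r) := by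
    intro F hF r
    exact (hF.continuousOn.integrableOn_compact (isCompact_closedBall (0 : EN N) r)).mono_set
      ball_subset_closedBall
  have hG2 : Continuous fun x : EN N => G ((2:ℝ) • x) := hG.comp (continuous_const_smul 2)
  rw [integral_sub ((hint _ hG2 1).const_mul _) (hint _ hG 1), integral_const_mul]
  have hsc : (2:ℝ)^N * ∫ x in ball (0 : EN N) 1, G ((2:ℝ) • x) = ∫ x in ball (0 : EN N) 2, G x := by
    have := Measure.setIntegral_comp_smul_of_pos (volume : Measure (EN N)) G (ball 0 1)
      (R := 2) two_pos
    rw [this, finrank_euclideanSpace_fin, smul_eq_mul, smul_unitBall (by norm_num)]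
    simp
  rw [hsc]
  have hsub : ball (0 : EN N) 1 ⊆ ball 0 2 := ball_subset_ball (by norm_num)
  rw [← setIntegral_sdiff measurableSet_ball (hint _ hG 2) hsub, ← shell_integral hN,
    ← integral_const_mul]
  apply setIntegral_congr_fun (measurableSet_ball.diff measurableSet_ball)
  intro x hx
  exact hfar x (by simpa using hx.2)

lemma supp_of_far {N : ℕ} {f : EN N → ℝ} {r : ℝ} (h : ∀ x, r ≤ ‖x‖ → f x = 0) :
    HasCompactSupport f := by
  apply HasCompactSupport.intro (isCompact_closedBall (0 : EN N) r)
  intro x hx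
  apply h
  simp at hx
  exact hx.le

lemma integral_mp_zero {N m : ℕ} (hm : m ≠ 0) {w : EN N → ℝ} (hw : ContDiff ℝ ∞ w)
    (hc : HasCompactSupport w) (i : Fin m → Fin N) :
    ∫ x, ((-1) ^ m * mixedPartial N m w (fun k => i k.rev) x) = 0 := by
  have := ibp i (u := fun _ => (1:ℝ)) contDiff_const hw (Or.inr hc)
  simp only [one_mul] at this
  rw [← this]
  have h1 : ∀ x, mixedPartial N m (fun _ => (1:ℝ)) i x = 0 := by
    intro x
    unfold mixedPartial
    rw [iteratedFDeriv_const_of_ne hm]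
    simp
  simp [h1]

lemma HH_far_zero {N : ℕ} (hN : 0 < N) {x : EN N} (hx : 1 ≤ ‖x‖) : HH N x = 0 := by
  have h1 := scale_diff hN (HH_contDiff N).continuous (fun x hx => HH_far hN hx)
  set f : (Fin N → Fin N) → EN N → ℝ := fun i y => WW N i ((2:ℝ) • y) - WW N i y with hf
  have hW2 : ∀ i, ContDiff ℝ ∞ (fun y => WW N i ((2:ℝ) • y)) :=
    fun i => smul_contDiff 2 (WW_contDiff i)
  have hfs : ∀ i, ContDiff ℝ ∞ (f i) := fun i => (hW2 i).sub (WW_contDiff i)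
  have hfc : ∀ i, HasCompactSupport (f i) := by
    intro i
    apply supp_of_far (r := 3/4)
    intro y hy
    simp only [hf, WW]
    rw [VV_scale hN.ne' i two_pos, chi_one hy, chi_one, sub_self]
    rw [norm_smul]; simp; linarith
  have h2 : ∀ x, (2 ^ N * HH N ((2:ℝ) • x) - HH N x)
      = ∑ i : Fin N → Fin N, (-1) ^ N * mixedPartial N N (f i) (fun k => i k.rev) x := by
    intro x
    unfold HH
    rw [Finset.mul_sum, ← Finset.sum_sub_distrib]
    refine Finset.sum_congr rfl fun i _ => ?_
    rw [mp_sub (hW2 i).contDiffAt (WW_contDiff i).contDiffAt, mp_scale 2 two_ne_zero]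
    ring
  simp only [h2] at h1
  rw [integral_finsetSum] at h1
  · simp only [integral_mp_zero hN.ne' (hfs _) (hfc _), Finset.sum_const_zero] at h1
    have h3 : HH N (EuclideanSpace.single (⟨0, hN⟩ : Fin N) 1) = 0 := by
      have hlog : 0 < Real.log 2 := Real.log_pos (by norm_num)
      rcases mul_eq_zero.1 h1.symm with h | h
      · exact h
      · exact absurd h (mul_pos (omega_pos hN) hlog).ne'
    rw [HH_far hN hx, h3, zero_mul]
  · intro i _
    exact ((mp_contDiff (hfs i) _).continuous.integrable_of_hasCompactSupport
      (mp_supp (hfc i) _)).const_mul _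

lemma gradNorm_continuous {N : ℕ} {u : EN N → ℝ} (hu : ContDiff ℝ ∞ u) :
    Continuous (gradNorm N N u) := by
  unfold gradNorm
  exact (continuous_finsetSum _ fun i _ => (mp_contDiff hu i).continuous.pow 2).sqrt

lemma gradNorm_integrable {N : ℕ} {u : EN N → ℝ} (hu : ContDiff ℝ ∞ u)
    (hc : HasCompactSupport u) : Integrable (gradNorm N N u) := by
  apply (gradNorm_continuous hu).integrable_of_hasCompactSupport
  have := hc.iteratedFDeriv (𝕜 := ℝ) N
  refine this.mono fun x hx => ?_
  rw [Function.mem_support] at hx ⊢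
  intro h
  apply hx
  simp only [gradNorm, mixedPartial, h, _root_.zero_apply]
  simp [-Fintype.card_pi]

lemma SS_bound {N : ℕ} (hN : 0 < N) (u : EN N → ℝ) (x : EN N) :
    |SS N u x| ≤ Real.sqrt (ell N hN) * gradNorm N N u x := by
  by_cases hx : x = 0
  · subst hx
    have : SS N u 0 = 0 := by simp [SS, VV_zero hN.ne']
    rw [this, abs_zero]
    unfold gradNorm
    positivity
  · rw [← sum_VV_sq hN hx, mul_comm, gradNorm, ← Real.sqrt_mul (by positivity)]
    apply Real.abs_le_sqrt
    exact Finset.sum_mul_sq_le_sq_mul_sq _ _ _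

lemma tendsto_chi {N : ℕ} (hN : 0 < N) (u : EN N → ℝ) (x : EN N) :
    Tendsto (fun n : ℕ => chi N (((n:ℝ) + 1) • x) * SS N u x) atTop (𝓝 (SS N u x)) := by
  by_cases hx : x = 0
  · subst hx
    have : SS N u 0 = 0 := by simp [SS, VV_zero hN.ne']
    simp [this]
  · have hn : 0 < ‖x‖ := norm_pos_iff.2 hx
    apply tendsto_const_nhds.congr'
    filter_upwards [eventually_ge_atTop (Nat.ceil (‖x‖⁻¹))] with n hnn
    rw [chi_one, one_mul]
    rw [norm_smul, Real.norm_of_nonneg (by positivity)]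
    have h1 : ‖x‖⁻¹ ≤ n := Nat.ceil_le.1 hnn
    have h2 : ‖x‖⁻¹ * ‖x‖ = 1 := inv_mul_cancel₀ hn.ne'
    nlinarith

lemma phi_eq {N : ℕ} (hN : 0 < N) {u : EN N → ℝ} (hu : ContDiff ℝ ∞ u)
    (hc : HasCompactSupport u) : ∫ x, SS N u x = u 0 * ∫ x, HH N x := by
  have hmeas : ∀ n : ℕ, AEStronglyMeasurable
      (fun x : EN N => chi N (((n:ℝ) + 1) • x) * SS N u x) volume := by
    intro n
    have e1 : ∀ x, chi N (((n:ℝ) + 1) • x) * SS N u x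
        = ∑ i : Fin N → Fin N, mixedPartial N N u i x * WW N i (((n:ℝ) + 1) • x) := by
      intro x
      unfold SS WW
      rw [Finset.mul_sum]
      refine Finset.sum_congr rfl fun i _ => ?_
      rw [VV_scale hN.ne' i (by positivity)]; ring
    simp only [e1]
    exact (continuous_finsetSum _ fun i _ => (mp_contDiff hu i).continuous.mul
      (smul_contDiff _ (WW_contDiff i)).continuous).aestronglyMeasurable
  have t1 : Tendsto (fun n : ℕ => ∫ x, chi N (((n:ℝ) + 1) • x) * SS N u x) atTop
      (𝓝 (∫ x, SS N u x)) := by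
    apply tendsto_integral_of_dominated_convergence
      (fun x => Real.sqrt (ell N hN) * gradNorm N N u x) hmeas
      ((gradNorm_integrable hu hc).const_mul _)
    · intro n
      refine Filter.Eventually.of_forall fun x => ?_
      rw [norm_mul, Real.norm_of_nonneg (chi_nonneg _), Real.norm_eq_abs]
      have := SS_bound hN u x
      nlinarith [chi_nonneg (((n:ℝ) + 1) • x), chi_le (((n:ℝ) + 1) • x), abs_nonneg (SS N u x)]
    · exact Filter.Eventually.of_forall fun x => tendsto_chi hN u x
  have hHc : HasCompactSupport (HH N) := supp_of_far fun x hx => HH_far_zero hN hx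
  have hHi : Integrable (HH N) :=
    (HH_contDiff N).continuous.integrable_of_hasCompactSupport hHc
  obtain ⟨C, hC⟩ := hc.exists_bound_of_continuous hu.continuous
  have t2 : Tendsto (fun n : ℕ => ∫ x, u (((n:ℝ) + 1)⁻¹ • x) * HH N x) atTop
      (𝓝 (∫ x, u 0 * HH N x)) := by
    apply tendsto_integral_of_dominated_convergence (fun x => C * ‖HH N x‖)
    · intro n
      exact ((smul_contDiff _ hu).continuous.mul
        (HH_contDiff N).continuous).aestronglyMeasurable
    · exact hHi.norm.const_mul _
    · intro n
      refine Filter.Eventually.of_forall fun x => ?_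
      rw [norm_mul]
      exact mul_le_mul_of_nonneg_right (hC _) (norm_nonneg _)
    · refine Filter.Eventually.of_forall fun x => ?_
      refine Tendsto.mul ?_ tendsto_const_nhds
      have h1 : Tendsto (fun n : ℕ => ((n:ℝ) + 1)⁻¹ • x) atTop (𝓝 ((0:ℝ) • x)) := by
        refine Tendsto.smul_const ?_ x
        simpa [one_div] using tendsto_one_div_add_atTop_nhds_zero_nat (𝕜 := ℝ)
      rw [zero_smul] at h1
      exact (hu.continuous.tendsto 0).comp h1
  have heq : ∀ n : ℕ, ∫ x, chi N (((n:ℝ) + 1) • x) * SS N u x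
      = ∫ x, u (((n:ℝ) + 1)⁻¹ • x) * HH N x := by
    intro n
    have hl : (0:ℝ) < (n:ℝ) + 1 := by positivity
    rw [ibp_W hN.ne' hu hc hl]
    have := Measure.integral_comp_smul_of_nonneg (volume : Measure (EN N))
      (fun x => u (((n:ℝ) + 1)⁻¹ • x) * HH N x) ((n:ℝ) + 1) (hR := hl.le)
    simp only [smul_smul, inv_mul_cancel₀ hl.ne', one_smul, finrank_euclideanSpace_fin,
      smul_eq_mul] at this
    simp only [mul_left_comm (u _)]
    rw [integral_const_mul, this, ← mul_assoc, mul_inv_cancel₀ (by positivity), one_mul]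
  simp only [heq] at t1
  rw [tendsto_nhds_unique t1 t2, integral_const_mul]

/-- truncated logarithm -/
def wlog (N : ℕ) (x : EN N) : ℝ := chi N x * logNorm N x

lemma wlog_contDiff (N : ℕ) : ContDiff ℝ ∞ (wlog N) :=
  contDiff_cut fun _ hx => logNorm_contDiffAt_s7 hx

lemma SS_wlog_continuous {N : ℕ} (hN : 0 < N) : Continuous (SS N (wlog N)) := by
  have : SS N (wlog N) = fun x => ∑ i : Fin N → Fin N,
      mixedPartial N N (wlog N) i x * WW N i ((2:ℝ) • x) := by
    ext x
    unfold SS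
    refine Finset.sum_congr rfl fun i _ => ?_
    by_cases hx : ‖x‖ < 1/2
    · have h1 : mixedPartial N N (wlog N) i x = 0 := by
        have : wlog N =ᶠ[𝓝 x] fun _ => 0 := by
          filter_upwards [(isOpen_lt continuous_norm continuous_const).mem_nhds hx] with y hy
          have hy' : ‖y‖ < 1/2 := hy
          simp [wlog, chi_zero hy'.le]
        rw [mp_congr this]
        unfold mixedPartial
        rw [iteratedFDeriv_const_of_ne hN.ne']
        simp
      rw [h1]; ring
    · unfold WW
      rw [VV_scale hN.ne' i two_pos, chi_one, one_mul]
      rw [norm_smul]; simp; linarith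
  rw [this]
  exact continuous_finsetSum _ fun i _ => (mp_contDiff (wlog_contDiff N) i).continuous.mul
      (smul_contDiff _ (WW_contDiff i)).continuous

lemma SS_wlog_far {N : ℕ} (hN : 0 < N) {x : EN N} (hx : 1 ≤ ‖x‖) :
    SS N (wlog N) x = ell N hN * (‖x‖ ^ N)⁻¹ := by
  have hn : 0 < ‖x‖ := by linarith
  rw [← sum_VV_sq hN (norm_pos_iff.1 hn), Finset.sum_mul]
  unfold SS
  refine Finset.sum_congr rfl fun i _ => ?_
  have h1 : mixedPartial N N (wlog N) i x = mixedPartial N N (logNorm N) i x := by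
    apply mp_congr
    have : {y : EN N | 3/4 < ‖y‖} ∈ 𝓝 x :=
      (isOpen_lt continuous_const continuous_norm).mem_nhds (by simp; linarith)
    filter_upwards [this] with y hy
    have hy' : 3/4 < ‖y‖ := hy
    simp [wlog, chi_one hy'.le]
  rw [h1]
  unfold VV
  field_simp

lemma integral_HH {N : ℕ} (hN : 0 < N) : ∫ x, HH N x = - (ell N hN * omegaSphere N) := by
  have hlog : 0 < Real.log 2 := Real.log_pos (by norm_num)
  set uu : EN N → ℝ := fun x => (wlog N ((2:ℝ) • x) - wlog N x) + (-Real.log 2) with huu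
  have hw2 : ContDiff ℝ ∞ (fun x => wlog N ((2:ℝ) • x)) := smul_contDiff 2 (wlog_contDiff N)
  have hs : ContDiff ℝ ∞ uu := (hw2.sub (wlog_contDiff N)).add contDiff_const
  have hc : HasCompactSupport uu := by
    apply supp_of_far (r := 3/4)
    intro y hy
    have h2 : ‖(2:ℝ) • y‖ = 2 * ‖y‖ := by rw [norm_smul]; simp
    simp only [huu, wlog]
    rw [chi_one hy, chi_one (by rw [h2]; linarith)]
    unfold logNorm
    rw [h2, Real.log_mul two_ne_zero (by linarith)]
    ring
  have h0 : uu 0 = - Real.log 2 := by simp [huu]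
  have h1 := phi_eq hN hs hc
  have h2 := scale_diff hN (SS_wlog_continuous hN) (fun x hx => SS_wlog_far hN hx)
  have h3 : ∀ x, SS N uu x = 2 ^ N * SS N (wlog N) ((2:ℝ) • x) - SS N (wlog N) x := by
    intro x
    unfold SS
    rw [Finset.mul_sum, ← Finset.sum_sub_distrib]
    refine Finset.sum_congr rfl fun i _ => ?_
    rw [huu, mp_add_const hN.ne' _ (hw2.sub (wlog_contDiff N)).contDiffAt,
      mp_sub hw2.contDiffAt (wlog_contDiff N).contDiffAt, mp_scale 2 two_ne_zero,
      VV_scale hN.ne' i two_pos]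
    ring
  simp only [h3] at h1
  rw [h2, h0] at h1
  have : Real.log 2 * ((∫ x, HH N x) + ell N hN * omegaSphere N) = 0 := by linarith
  have := (mul_eq_zero.1 this).resolve_left hlog.ne'
  linarith

lemma mp_log_line {N : ℕ} (a : Fin N) (m : ℕ) : ∀ t : ℝ, 0 < t →
    mixedPartial N (m+1) (logNorm N) (fun _ => a) (t • EuclideanSpace.single a 1)
      = (-1) ^ m * m.factorial * (t ^ (m + 1))⁻¹ := by
  have hne : ∀ t : ℝ, 0 < t → t • EuclideanSpace.single a (1:ℝ) ≠ 0 := by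
    intro t ht h
    have := congrArg norm h
    rw [norm_smul] at this
    simp at this
    exact ht.ne' this
  have hline : ∀ t : ℝ, HasDerivAt (fun s : ℝ => s • EuclideanSpace.single a (1:ℝ))
      (EuclideanSpace.single a (1:ℝ)) t := by
    intro t
    simpa using (hasDerivAt_id t).smul_const (EuclideanSpace.single a (1:ℝ))
  have key : ∀ (m : ℕ) (t : ℝ), 0 < t →
      HasDerivAt (fun s : ℝ => mixedPartial N m (logNorm N) (fun _ => a)
        (s • EuclideanSpace.single a 1))
        (mixedPartial N (m+1) (logNorm N) (fun _ => a) (t • EuclideanSpace.single a 1)) t := by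
    intro m t ht
    rw [mp_succ_left (logNorm_contDiffAt_s7 (hne t ht))]
    have hd := (mp_contDiffAt (logNorm_contDiffAt_s7 (hne t ht))
      (fun _ : Fin m => a)).differentiableAt (by simp)
    exact hd.hasFDerivAt.comp_hasDerivAt t (hline t)
  induction m with
  | zero =>
    intro t ht
    have h1 := key 0 t ht
    have h2 : (fun s : ℝ => mixedPartial N 0 (logNorm N) (fun _ => a)
        (s • EuclideanSpace.single a 1)) = Real.log := by
      ext s
      simp [mp_zero, logNorm, norm_smul]
    rw [h2] at h1
    rw [h1.unique (Real.hasDerivAt_log ht.ne')]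
    simp
  | succ m ih =>
    intro t ht
    have h1 := key (m+1) t ht
    have h2 : (fun s : ℝ => mixedPartial N (m+1) (logNorm N) (fun _ => a)
        (s • EuclideanSpace.single a 1)) =ᶠ[𝓝 t]
        fun s => (-1) ^ m * m.factorial * (s ^ (m + 1))⁻¹ := by
      filter_upwards [lt_mem_nhds ht] with s hs
      exact ih s hs
    have h3 : HasDerivAt (fun s : ℝ => (-1) ^ m * (m.factorial : ℝ) * (s ^ (m + 1))⁻¹)
        ((-1) ^ m * (m.factorial : ℝ) * (-(((m + 1 : ℕ) : ℝ) * t ^ m) / (t ^ (m + 1)) ^ 2)) t := by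
      have := ((hasDerivAt_pow (m+1) t).inv (pow_ne_zero _ ht.ne')).const_mul
        ((-1) ^ m * (m.factorial : ℝ))
      simpa using this
    rw [(h1.congr_of_eventuallyEq h2.symm).unique h3, Nat.factorial_succ]
    push_cast
    field_simp
    ring

lemma ell_pos {N : ℕ} (hN : 0 < N) : 0 < ell N hN := by
  unfold ell
  apply Finset.sum_pos' (fun i _ => sq_nonneg _)
  refine ⟨fun _ => ⟨0, hN⟩, Finset.mem_univ _, ?_⟩
  obtain ⟨M, rfl⟩ : ∃ M, N = M + 1 := ⟨N - 1, by omega⟩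
  have := mp_log_line (N := M+1) ⟨0, hN⟩ M 1 one_pos
  rw [one_smul] at this
  rw [this]
  positivity

lemma main_zero {N : ℕ} (hN : 0 < N) {u : EN N → ℝ} (hu : ContDiff ℝ ∞ u)
    (hc : HasCompactSupport u) :
    |u 0| ≤ (Real.sqrt (ell N hN) * omegaSphere N)⁻¹ * ∫ y, gradNorm N N u y := by
  have h1 := phi_eq hN hu hc
  rw [integral_HH hN] at h1
  have hω := omega_pos hN
  have hl := ell_pos hN
  have h2 : |∫ x, SS N u x| ≤ Real.sqrt (ell N hN) * ∫ y, gradNorm N N u y := by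
    rw [← integral_const_mul, ← Real.norm_eq_abs]
    exact norm_integral_le_of_norm_le ((gradNorm_integrable hu hc).const_mul _)
      (Filter.Eventually.of_forall fun x => SS_bound hN u x)
  rw [h1, abs_mul, abs_neg, abs_of_pos (mul_pos hl hω)] at h2
  have hs : 0 < Real.sqrt (ell N hN) := Real.sqrt_pos.2 hl
  have hss : Real.sqrt (ell N hN) * Real.sqrt (ell N hN) = ell N hN := Real.mul_self_sqrt hl.le
  rw [inv_mul_eq_div, le_div_iff₀ (mul_pos hs hω)]
  refine le_of_mul_le_mul_left ?_ hs
  calc _ = |u 0| * (Real.sqrt (ell N hN) * Real.sqrt (ell N hN) * omegaSphere N) := by ring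
    _ ≤ _ := by rw [hss]; exact h2

/-- the Sobolev embedding inequality
`‖u‖_∞ ≤ (√(ℓ_N) ω_{N-1})⁻¹ ∫ |∇^N u|` for smooth compactly supported `u`. -/
theorem statement7 (N : ℕ) (hN : 1 ≤ N)
    (u : EuclideanSpace ℝ (Fin N) → ℝ)
    (hu : ContDiff ℝ (⊤ : ℕ∞) u) (hsupp : HasCompactSupport u)
    (x : EuclideanSpace ℝ (Fin N)) :
    |u x| ≤ (Real.sqrt (ell N (by omega)) * omegaSphere N)⁻¹ * ∫ y, gradNorm N N u y := by
  have hN' : 0 < N := hN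
  have hs : ContDiff ℝ ∞ (fun y => u (y + x)) := hu.comp (contDiff_id.add contDiff_const)
  have hc : HasCompactSupport (fun y => u (y + x)) :=
    hsupp.comp_homeomorph (Homeomorph.addRight x)
  have h := main_zero hN' hs hc
  have hg : ∀ y, gradNorm N N (fun y => u (y + x)) y = gradNorm N N u (y + x) := by
    intro y
    unfold gradNorm mixedPartial
    simp only [iteratedFDeriv_comp_add_right]
  simp only [hg, zero_add] at h
  rwa [integral_add_right_eq_self (fun y => gradNorm N N u y) x] at h
end
end
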